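/- Let k ≥ 1 and Δ ≥ 1 be integers and c > 0. There exists a constant C, depending only on k, c and Δ, such that the following holds. Let G be a finite connected graph with vertex set V satisfying ∇_r(G) ≤ c·(r+1)^k for all integers r ≥ 0, let δ: V → {1, …, Δ} be a demand function, and let D ⊆ V be such that the subgraph induced on D is connected and D satisfies the demands (every vertex v ∈ V has at least δ(v) neighbors in D or is itself in D with at least δ(v) vertices of D in its closed neighborhood). Let ε ∈ (0,1) and set K = ⌈C·ε^{−(2k+6)}·(1 + log(1/ε))^{2k+5}⌉. Then every K-locally minimal subset L ⊆ D such that the subgraph induced on L is connected and L satisfies the demands, satisfies |L| ≤ (1 + ε)·min{|S| : S ⊆ D, the subgraph induced on S is connected, and S satisfies the demands}. -/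

import Mathlib

/-- A graph is `t`-shallow if some vertex reaches every other vertex by a path of at most
`t` edges (graph radius at most `t`). -/
def IsShallowGraph {V : Type*} (G : SimpleGraph V) (t : ℕ) : Prop :=
  ∃ h : V, ∀ v : V, G.Reachable h v ∧ G.dist h v ≤ t

/-- `H` is a `t`-shallow minor of `G`. -/
def IsShallowMinor {V W : Type*} (G : SimpleGraph V) (H : SimpleGraph W) (t : ℕ) : Prop :=
  ∃ cl : W → Set V,
    (Pairwise fun w w' => Disjoint (cl w) (cl w')) ∧
    (∀ w, IsShallowGraph (G.induce (cl w)) t) ∧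
    (∀ w w', H.Adj w w' → ∃ u ∈ cl w, ∃ v ∈ cl w', G.Adj u v)

/-- `∇_r(G) ≤ x`. -/
def NablaLE {V : Type*} (G : SimpleGraph V) (r : ℕ) (x : ℝ) : Prop :=
  ∀ (W : Type) [Fintype W] (H : SimpleGraph W),
    IsShallowMinor G H r → (H.edgeSet.ncard : ℝ) ≤ x * (Fintype.card W : ℝ)

/-- `S` satisfies the demands `δ`: for every vertex `v`, the closed neighborhood of `v`
contains at least `δ v` vertices of `S`. -/
def MeetsDemands {V : Type*} (G : SimpleGraph V) (δ : V → ℕ) (S : Set V) : Prop :=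
  ∀ v : V, δ v ≤ ({u ∈ S | u = v ∨ G.Adj u v}).ncard

/-!
Let `S` be a competitor of `L` and put `U = L ∪ S`. Choose for every vertex `v` a set `γ v` of
`δ v` vertices of `L` in its closed neighbourhood, and join `x` and `y` in an auxiliary graph if
they are adjacent in `G`, or if for some `v` one of them lies in `γ v` and the other one in the
closed neighbourhood of `v`. The auxiliary graph has only small shallow clique minors: such a minor
pulls back to connected shallow sets of `G` that touch pairwise and overlap boundedly; in a random
sample of these sets many pairs are joined by paths that avoid the other sampled sets, and these
pairs form a dense shallow minor of `G`.

A vertex expander contains large shallow clique minors, so large vertex sets have sparse cuts, and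
cutting recursively covers the vertices and edges on `U` by sets `P` of `O(ε⁻¹)^(2*k + 6)` elements
with total size at most `(1 + ε/24)|U|`. Let `I` consist of the vertices of `P` that lie in no other
set of the cover. Exchanging `L ∩ I` for `S ∩ P` preserves the demands and creates at most
`|P \ I| + 1` components, which `2|P \ I|` further vertices of `D` reconnect. Local minimality
gives `|L ∩ I| ≤ |S ∩ P| + 2|P \ I|`, and summing over all `P` bounds `|L|` by `(1 + ε)|S|`.
-/

open scoped Finset

section Links

variable {V : Type*} {G : SimpleGraph V} {A B : Set V} {x y z : V} {m n : ℕ}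

/-- `u` lies in the closed neighbourhood of `v`. -/
def Touches (G : SimpleGraph V) (u v : V) : Prop := u = v ∨ G.Adj u v

/-- `x` and `y` are joined by a walk of `G` with at most `n` edges and all its vertices in `A`. -/
def LinkedWithin (G : SimpleGraph V) (A : Set V) (n : ℕ) (x y : V) : Prop :=
  ∃ w : G.Walk x y, w.length ≤ n ∧ ∀ u ∈ w.support, u ∈ A

/-- `x` and `y` lie in the same component of the subgraph induced on `A`; in particular they
belong to `A`. -/
def Linked (G : SimpleGraph V) (A : Set V) (x y : V) : Prop := ∃ n, LinkedWithin G A n x y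

theorem Touches.symm (h : Touches G x y) : Touches G y x :=
  h.imp Eq.symm SimpleGraph.Adj.symm

namespace LinkedWithin

theorem refl (hx : x ∈ A) : LinkedWithin G A n x x :=
  ⟨.nil, Nat.zero_le n, by simpa using hx⟩

theorem symm : LinkedWithin G A n x y → LinkedWithin G A n y x
  | ⟨w, hn, hA⟩ => ⟨w.reverse, by simpa using hn, by simpa using hA⟩

theorem trans : LinkedWithin G A m x y → LinkedWithin G A n y z → LinkedWithin G A (m + n) x z
  | ⟨w, hm, hA⟩, ⟨w', hn, hA'⟩ => by
    refine ⟨w.append w', by simpa using add_le_add hm hn, fun u hu => ?_⟩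
    exact ((SimpleGraph.Walk.mem_support_append_iff _ _).1 hu).elim (hA u) (hA' u)

theorem mono (hAB : A ⊆ B) (hmn : m ≤ n) : LinkedWithin G A m x y → LinkedWithin G B n x y
  | ⟨w, hm, hA⟩ => ⟨w, hm.trans hmn, fun u hu => hAB (hA u hu)⟩

theorem right_mem : LinkedWithin G A n x y → y ∈ A
  | ⟨w, _, hA⟩ => hA y w.end_mem_support

end LinkedWithin

theorem Touches.linkedWithin (h : Touches G x y) (hx : x ∈ A) (hy : y ∈ A) :
    LinkedWithin G A 1 x y := by
  rcases h with rfl | h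
  · exact .refl hx
  · exact ⟨h.toWalk, by simp, by simp [hx, hy]⟩

namespace Linked

theorem symm : Linked G A x y → Linked G A y x
  | ⟨n, h⟩ => ⟨n, h.symm⟩

theorem trans : Linked G A x y → Linked G A y z → Linked G A x z
  | ⟨m, h⟩, ⟨n, h'⟩ => ⟨m + n, h.trans h'⟩

theorem mono (hAB : A ⊆ B) : Linked G A x y → Linked G B x y
  | ⟨n, h⟩ => ⟨n, h.mono hAB le_rfl⟩

theorem of_connected (hA : (G.induce A).Connected) (hx : x ∈ A) (hy : y ∈ A) :
    Linked G A x y := by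
  have of_walk {a b : A} (w : (G.induce A).Walk a b) : Linked G A a b := by
    induction w with
    | @nil a => exact ⟨0, .refl a.2⟩
    | @cons a b _ h _ ih => exact .trans ⟨1, Touches.linkedWithin (.inr h) a.2 b.2⟩ ih
  exact (hA.preconnected ⟨x, hx⟩ ⟨y, hy⟩).elim of_walk

theorem exists_adj_of_notMem_of_mem {I : Set V} (h : Linked G A x z) (hx : x ∉ I) (hz : z ∈ I) :
    ∃ y w, Linked G (A \ I) x y ∧ w ∈ A ∩ I ∧ G.Adj y w := by
  obtain ⟨n, w, -, hA⟩ := h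
  induction w with
  | nil => exact absurd hz hx
  | @cons x v z hxv w ih =>
    have hxA : x ∈ A \ I := ⟨hA x (by simp), hx⟩
    have hA' : ∀ u ∈ w.support, u ∈ A := fun u hu => hA u (by simp [hu])
    by_cases hv : v ∈ I
    · exact ⟨x, v, ⟨0, .refl hxA⟩, ⟨hA' v w.start_mem_support, hv⟩, hxv⟩
    · obtain ⟨y, u, hvy, hu, hyu⟩ := ih hv hz hA'
      have hvA : v ∈ A \ I := ⟨hA' v w.start_mem_support, hv⟩
      exact ⟨y, u, .trans ⟨1, Touches.linkedWithin (.inr hxv) hxA hvA⟩ hvy, hu, hyu⟩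

end Linked

theorem connected_induce_of_linked (hA : A.Nonempty) (h : ∀ x ∈ A, ∀ y ∈ A, Linked G A x y) :
    (G.induce A).Connected := by
  have : Nonempty A := hA.to_subtype
  refine ⟨fun x y => ?_⟩
  obtain ⟨_, w, -, hw⟩ := h x x.2 y y.2
  exact ⟨w.induce A hw⟩

end Links

section Centers

variable {V : Type*} {G : SimpleGraph V} {A B : Set V} {x x' y z : V} {r n : ℕ}

/-- Inside `F`, the vertex `x ∈ F` reaches every vertex of `F` by a walk of at most `r` edges. -/
def IsCenter (G : SimpleGraph V) (F : Set V) (r : ℕ) (x : V) : Prop :=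
  x ∈ F ∧ ∀ u ∈ F, LinkedWithin G F r x u

theorem IsCenter.mono_radius (h : IsCenter G A n x) (hn : n ≤ r) : IsCenter G A r x :=
  ⟨h.1, fun u hu => (h.2 u hu).mono subset_rfl hn⟩

theorem isCenter_of_forall_mem (hx : x ∈ A)
    (h : ∀ u ∈ A, ∃ F ⊆ A, u ∈ F ∧ IsCenter G F r x) : IsCenter G A r x := by
  refine ⟨hx, fun u hu => ?_⟩
  obtain ⟨F, hFA, huF, hF⟩ := h u hu
  exact (hF.2 u huF).mono hFA le_rfl

theorem IsCenter.isShallowGraph (h : IsCenter G A r x) : IsShallowGraph (G.induce A) r := by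
  refine ⟨⟨x, h.1⟩, fun ⟨u, hu⟩ => ?_⟩
  obtain ⟨w, hr, hA⟩ := h.2 u hu
  refine ⟨⟨w.induce A hA⟩, (SimpleGraph.dist_le (w.induce A hA)).trans ?_⟩
  have hlen : (w.induce A hA).length = w.length := by
    rw [← Nat.add_right_cancel_iff (n := 1), ← SimpleGraph.Walk.length_support,
      SimpleGraph.Walk.support_induce, List.length_attachWith, w.length_support]
  exact hlen.trans_le hr

theorem isCenter_setOf_mem_support (w : G.Walk x y) :
    IsCenter G {u | u ∈ w.support} w.length x := by
  classical
  refine ⟨w.start_mem_support, fun u hu => ⟨w.takeUntil u hu, ?_, ?_⟩⟩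
  · exact w.length_takeUntil_le_length hu
  · exact fun v hv => w.support_takeUntil_subset_support hu hv

theorem LinkedWithin.exists_finset (h : LinkedWithin G A n x y) :
    ∃ F : Finset V, (F : Set V) ⊆ A ∧ y ∈ F ∧ #F ≤ n + 1 ∧ IsCenter G F n x := by
  classical
  obtain ⟨w, hn, hA⟩ := h
  refine ⟨w.support.toFinset, fun u hu => hA u (by simpa using hu), by simp, ?_, ?_⟩
  · calc #w.support.toFinset ≤ w.support.length := List.toFinset_card_le _
      _ = w.length + 1 := w.length_support
      _ ≤ n + 1 := by lia
  · simpa using (isCenter_setOf_mem_support w).mono_radius hn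

open SimpleGraph.Walk in
/-- If the walks meet at `u`, both are cut at `u` and one loses its last edge; since `x ≠ x'` one of
them has an edge to lose. -/
theorem exists_disjoint_walks (hx : x ≠ x') (p : G.Walk x y) (q : G.Walk x' z)
    (hyz : Touches G y z) :
    ∃ (y' z' : V) (p' : G.Walk x y') (q' : G.Walk x' z'), p'.length ≤ p.length ∧
      q'.length ≤ q.length ∧ p'.support ⊆ p.support ∧ q'.support ⊆ q.support ∧
      p'.support.Disjoint q'.support ∧ G.Adj y' z' := by
  classical
  induction hn : p.length + q.length using Nat.strong_induction_on generalizing y z with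
  | _ n ih =>
  by_cases hdisj : p.support.Disjoint q.support
  · have hne : y ≠ z := fun h => hdisj p.end_mem_support (h ▸ q.end_mem_support)
    exact ⟨y, z, p, q, le_rfl, le_rfl, List.Subset.refl _, List.Subset.refl _, hdisj,
      hyz.resolve_left hne⟩
  suffices shorter : ∃ (y₁ z₁ : V) (p₁ : G.Walk x y₁) (q₁ : G.Walk x' z₁), Touches G y₁ z₁ ∧
      p₁.length + q₁.length < n ∧ p₁.length ≤ p.length ∧ q₁.length ≤ q.length ∧
      p₁.support ⊆ p.support ∧ q₁.support ⊆ q.support by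
    obtain ⟨y₁, z₁, p₁, q₁, h, hlt, hp, hq, hps, hqs⟩ := shorter
    obtain ⟨y', z', p', q', hp', hq', hps', hqs', hd, hadj⟩ := ih _ hlt p₁ q₁ h rfl
    exact ⟨y', z', p', q', hp'.trans hp, hq'.trans hq, List.Subset.trans hps' hps,
      List.Subset.trans hqs' hqs, hd, hadj⟩
  obtain ⟨u, hup, huq⟩ : ∃ u, u ∈ p.support ∧ u ∈ q.support := by
    simpa [List.Disjoint] using hdisj
  have hp := p.length_takeUntil_le_length hup
  have hq := q.length_takeUntil_le_length huq
  have hps := p.support_takeUntil_subset_support hup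
  have hqs := q.support_takeUntil_subset_support huq
  by_cases hnil : (p.takeUntil u hup).Nil
  · have hnil' : ¬(q.takeUntil u huq).Nil := fun h => hx (hnil.eq.trans h.eq.symm)
    have hlen := length_dropLast_add_one hnil'
    refine ⟨u, _, p.takeUntil u hup, (q.takeUntil u huq).dropLast,
      .inr (adj_penultimate hnil').symm, by lia, hp, by lia, hps, fun v hv => hqs ?_⟩
    exact List.mem_of_mem_dropLast (support_dropLast hnil' ▸ hv)
  · have hlen := length_dropLast_add_one hnil
    refine ⟨_, u, (p.takeUntil u hup).dropLast, q.takeUntil u huq,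
      .inr (adj_penultimate hnil), by lia, by lia, hq, fun v hv => hps ?_, hqs⟩
    exact List.mem_of_mem_dropLast (support_dropLast hnil ▸ hv)

theorem exists_disjoint_centered_finsets (hx : x ≠ x') (hp : LinkedWithin G A r x y)
    (hq : LinkedWithin G B r x' z) (hyz : Touches G y z) :
    ∃ F F' : Finset V, (F : Set V) ⊆ A ∧ (F' : Set V) ⊆ B ∧ #F ≤ r + 1 ∧ #F' ≤ r + 1 ∧
      IsCenter G F r x ∧ IsCenter G F' r x' ∧ Disjoint F F' ∧ ∃ u ∈ F, ∃ v ∈ F', G.Adj u v := by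
  classical
  obtain ⟨p, hpr, hpA⟩ := hp
  obtain ⟨q, hqr, hqB⟩ := hq
  obtain ⟨y', z', p', q', hp', hq', hps, hqs, hdisj, hadj⟩ := exists_disjoint_walks hx p q hyz
  have card_le {a b : V} (w : G.Walk a b) (hw : w.length ≤ r) : #w.support.toFinset ≤ r + 1 :=
    (List.toFinset_card_le _).trans (by rw [w.length_support]; lia)
  refine ⟨p'.support.toFinset, q'.support.toFinset, fun u hu => hpA u (hps (by simpa using hu)),
    fun u hu => hqB u (hqs (by simpa using hu)), card_le p' (hp'.trans hpr),
    card_le q' (hq'.trans hqr), ?_, ?_, ?_, y', by simp, z', by simp, hadj⟩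
  · simpa using (isCenter_setOf_mem_support p').mono_radius (hp'.trans hpr)
  · simpa using (isCenter_setOf_mem_support q').mono_radius (hq'.trans hqr)
  · exact Finset.disjoint_left.2 fun u hu hu' => hdisj (by simpa using hu) (by simpa using hu')

end Centers

section Sampling

open Fintype (card)

variable {ι α : Type*} [Fintype ι] [Fintype α] [DecidableEq ι] [DecidableEq α]

theorem card_filter_forall_mem_eq_mul_pow (z : α) (A : Finset ι) :
    #{χ : ι → α | ∀ a ∈ A, χ a = z} * card α ^ #A = card α ^ card ι := by
  have hpi : ({χ : ι → α | ∀ a ∈ A, χ a = z} : Finset (ι → α)) =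
      Fintype.piFinset fun a => if a ∈ A then {z} else Finset.univ := by
    ext χ
    simp only [Finset.mem_filter_univ, Fintype.mem_piFinset]
    exact forall_congr' fun a => by split_ifs with ha <;> simp [ha]
  have hcard : #{χ : ι → α | ∀ a ∈ A, χ a = z} = card α ^ #Aᶜ := by
    rw [hpi, Fintype.card_piFinset]
    simp only [apply_ite Finset.card, Finset.card_singleton, Finset.card_univ, Finset.prod_ite,
      Finset.prod_const, one_pow, one_mul]
    rw [Finset.filter_notMem_eq_sdiff, Finset.compl_eq_univ_sdiff]
  rw [hcard, ← pow_add, A.card_compl_add_card]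

theorem pow_card_le_mul_card_filter_pair {i j : ι} (hij : i ≠ j) {F : Finset ι} (hi : i ∉ F)
    (hj : j ∉ F) (hF : 2 * #F ≤ card α) (z : α) :
    card α ^ card ι ≤
      2 * card α ^ 2 * #{χ : ι → α | χ i = z ∧ χ j = z ∧ ∀ k ∈ F, χ k ≠ z} := by
  set q := card α
  have hq : 0 < q := Fintype.card_pos_iff.2 ⟨z⟩
  have hpair : #{χ : ι → α | ∀ a ∈ ({i, j} : Finset ι), χ a = z} * q ^ 2 = q ^ card ι := by
    simpa only [Finset.card_pair hij] using card_filter_forall_mem_eq_mul_pow z {i, j}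
  have htriple (k : ι) (hk : k ∈ F) :
      #{χ : ι → α | ∀ a ∈ ({k, i, j} : Finset ι), χ a = z} * q ^ 3 = q ^ card ι := by
    have hcard : #({k, i, j} : Finset ι) = 3 := Finset.card_eq_three.2
      ⟨k, i, j, ne_of_mem_of_not_mem hk hi, ne_of_mem_of_not_mem hk hj, hij, rfl⟩
    simpa only [hcard] using card_filter_forall_mem_eq_mul_pow z {k, i, j}
  set good := #{χ : ι → α | χ i = z ∧ χ j = z ∧ ∀ k ∈ F, χ k ≠ z}
  set bad := ∑ k ∈ F, #{χ : ι → α | ∀ a ∈ ({k, i, j} : Finset ι), χ a = z}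
  have hcover : #{χ : ι → α | ∀ a ∈ ({i, j} : Finset ι), χ a = z} ≤ good + bad := by
    refine le_trans (Finset.card_le_card fun χ hχ => ?_) ((Finset.card_union_le _ _).trans
      (Nat.add_le_add_left Finset.card_biUnion_le _))
    simp only [Finset.mem_union, Finset.mem_biUnion, Finset.mem_filter_univ, Finset.mem_insert,
      Finset.mem_singleton, forall_eq_or_imp, forall_eq] at hχ ⊢
    by_cases h : ∃ k ∈ F, χ k = z
    · exact .inr (h.imp fun k hk => ⟨hk.1, hk.2, hχ⟩)
    · exact .inl ⟨hχ.1, hχ.2, fun k hk hz => h ⟨k, hk, hz⟩⟩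
  have hbad : 2 * q ^ 2 * bad ≤ q ^ card ι := by
    refine Nat.le_of_mul_le_mul_left ?_ hq
    calc q * (2 * q ^ 2 * bad) = 2 * (bad * q ^ 3) := by ring
      _ = 2 * #F * q ^ card ι := by
        rw [Finset.sum_mul, Finset.sum_congr rfl htriple, Finset.sum_const, smul_eq_mul, mul_assoc]
      _ ≤ q * q ^ card ι := Nat.mul_le_mul_right _ hF
  have hgood : 2 * q ^ card ι ≤ 2 * q ^ 2 * good + 2 * q ^ 2 * bad := by
    calc 2 * q ^ card ι ≤ 2 * ((good + bad) * q ^ 2) := by rw [← hpair]; gcongr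
      _ = _ := by ring
  lia

theorem card_mul_pow_le_sum_card_filter_offDiag {q : ℕ} {F : ι → ι → Finset ι}
    (hF : ∀ i j, i ≠ j → 2 * #(F i j) ≤ q) (hl : ∀ i j, i ∉ F i j) (hr : ∀ i j, j ∉ F i j)
    (z : Fin q) :
    card ι * (card ι - 1) * q ^ card ι ≤ 2 * q ^ 2 * ∑ χ : ι → Fin q,
      #{p ∈ ({i | χ i = z} : Finset ι).offDiag |
        Disjoint (F p.1 p.2) ({i | χ i = z} : Finset ι)} := by
  let avoids (χ : ι → Fin q) (p : ι × ι) : Prop :=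
    χ p.1 = z ∧ χ p.2 = z ∧ ∀ k ∈ F p.1 p.2, χ k ≠ z
  have habove (χ : ι → Fin q) :
      ({p ∈ ({i | χ i = z} : Finset ι).offDiag |
        Disjoint (F p.1 p.2) ({i | χ i = z} : Finset ι)} : Finset (ι × ι)) =
      Finset.bipartiteAbove avoids Finset.univ.offDiag χ := by
    ext p
    simp only [avoids, Finset.bipartiteAbove, Finset.mem_filter, Finset.mem_offDiag,
      Finset.mem_univ, true_and, Finset.disjoint_left]
    tauto
  have hcard : card ι * (card ι - 1) = #(Finset.univ : Finset ι).offDiag := by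
    simp [Finset.offDiag_card, Nat.mul_sub]
  simp_rw [habove]
  rw [Finset.sum_card_bipartiteAbove_eq_sum_card_bipartiteBelow, Finset.mul_sum, hcard,
    ← smul_eq_mul]
  refine Finset.card_nsmul_le_sum _ _ _ fun p hp => ?_
  have hne : p.1 ≠ p.2 := by simpa using hp
  simpa [avoids, Finset.bipartiteBelow] using
    pow_card_le_mul_card_filter_pair hne (hl _ _) (hr _ _) (by simpa using hF _ _ hne) z

theorem card_le_of_forall_card_offDiag_le (q : ℕ) (hq : 0 < q) (F : ι → ι → Finset ι)
    (hF : ∀ i j, i ≠ j → 2 * #(F i j) ≤ q) (hl : ∀ i j, i ∉ F i j) (hr : ∀ i j, j ∉ F i j) {d : ℝ}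
    (hd₀ : 0 ≤ d)
    (hd : ∀ J : Finset ι, (#{p ∈ J.offDiag | Disjoint (F p.1 p.2) J} : ℝ) ≤ 2 * d * #J) :
    (card ι : ℝ) ≤ 1 + 4 * d * q := by
  let z : Fin q := ⟨0, hq⟩
  let J (χ : ι → Fin q) : Finset ι := {i | χ i = z}
  set n := card ι
  have hsingle (i : ι) : #{χ : ι → Fin q | χ i = z} * q = q ^ n := by
    simpa using card_filter_forall_mem_eq_mul_pow z {i}
  have hsum : q * ∑ χ, #(J χ) = n * q ^ n := by
    have hswap : ∑ χ, #(J χ) = ∑ i, #{χ : ι → Fin q | χ i = z} :=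
      Finset.sum_card_bipartiteAbove_eq_sum_card_bipartiteBelow fun (χ : ι → Fin q) i => χ i = z
    rw [hswap, mul_comm, Finset.sum_mul, Finset.sum_congr rfl fun i _ => hsingle i]
    simp [n]
  have hpairs : n * (n - 1) * q ^ n ≤
      2 * q ^ 2 * ∑ χ, #{p ∈ (J χ).offDiag | Disjoint (F p.1 p.2) (J χ)} :=
    card_mul_pow_le_sum_card_filter_offDiag hF hl hr z
  rcases Nat.eq_zero_or_pos n with hn | hn
  · rw [hn, Nat.cast_zero]
    positivity
  have hmain : (n : ℝ) * q ^ n * (n - 1) ≤ n * q ^ n * (4 * d * q) := by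
    calc (n : ℝ) * q ^ n * (n - 1) = (n * (n - 1) * q ^ n : ℕ) := by push_cast [hn]; ring
      _ ≤ 2 * q ^ 2 * ∑ χ, (#{p ∈ (J χ).offDiag | Disjoint (F p.1 p.2) (J χ)} : ℝ) := by
        exact_mod_cast hpairs
      _ ≤ 2 * q ^ 2 * ∑ χ, 2 * d * #(J χ) := by gcongr with χ; exact hd (J χ)
      _ = 4 * d * q * (q * ∑ χ, #(J χ) : ℕ) := by push_cast; rw [← Finset.mul_sum]; ring
      _ = n * q ^ n * (4 * d * q) := by rw [hsum]; push_cast; ring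
  have := le_of_mul_le_mul_left hmain (by positivity)
  linarith

end Sampling

section Ply

theorem exists_forall_ne_symm_choice {ι α : Type*} [Nonempty α] {P : ι → ι → α → α → Prop}
    (hsymm : ∀ i j a b, P i j a b → P j i b a) (hex : ∀ i j, i ≠ j → ∃ a b, P i j a b) :
    ∃ A : ι → ι → α, ∀ i j, i ≠ j → P i j (A i j) (A j i) := by
  obtain ⟨_, -⟩ := exists_wellFoundedLT ι
  choose! a b hab using hex
  refine ⟨fun i j => if i < j then a i j else b j i, fun i j hij => ?_⟩
  rcases lt_or_gt_of_ne hij with h | h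
  · simpa only [if_pos h, if_neg h.asymm] using hab i j hij
  · simpa only [if_pos h, if_neg h.asymm] using hsymm _ _ _ _ (hab j i hij.symm)

theorem NablaLE.card_filter_adj_le {V ι : Type*} [Fintype ι] {G : SimpleGraph V} {r : ℕ} {d : ℝ}
    (hG : NablaLE G r d) (H : SimpleGraph ι) [DecidableRel H.Adj] (cl : ι → Set V)
    (hdisj : ∀ i ∈ H.support, ∀ j ∈ H.support, i ≠ j → Disjoint (cl i) (cl j))
    (hshallow : ∀ i ∈ H.support, IsShallowGraph (G.induce (cl i)) r)
    (hadj : ∀ i j, H.Adj i j → ∃ u ∈ cl i, ∃ v ∈ cl j, G.Adj u v) :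
    (#{p : ι × ι | H.Adj p.1 p.2} : ℝ) ≤ 2 * d * H.support.ncard := by
  classical
  let e : Fin H.support.ncard ≃ H.support :=
    (Fintype.equivFinOfCardEq (Nat.card_eq_fintype_card.symm.trans rfl)).symm
  let f (a : Fin H.support.ncard) : ι := e a
  have hf : Function.Injective f := Subtype.val_injective.comp e.injective
  have hminor : IsShallowMinor G (H.comap f) r :=
    ⟨cl ∘ f, fun a b hab => hdisj _ (e a).2 _ (e b).2 (hf.ne hab),
      fun a => hshallow _ (e a).2, fun a b => hadj (f a) (f b)⟩
  have hedges : (#(H.comap f).edgeFinset : ℝ) ≤ d * H.support.ncard := by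
    simpa [← SimpleGraph.coe_edgeFinset, Set.ncard_coe_finset] using hG _ _ hminor
  have hcover : ({p : ι × ι | H.Adj p.1 p.2} : Finset (ι × ι)) ⊆
      ({q | (H.comap f).Adj q.1 q.2} : Finset _).image (Prod.map f f) := by
    rintro ⟨i, j⟩ hij
    have hij : H.Adj i j := by simpa using hij
    refine Finset.mem_image.2 ⟨(e.symm ⟨i, j, hij⟩, e.symm ⟨j, i, hij.symm⟩), ?_, ?_⟩ <;>
      simp [f, hij]
  have hcard : #{p : ι × ι | H.Adj p.1 p.2} ≤ 2 * #(H.comap f).edgeFinset := by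
    rw [SimpleGraph.two_mul_card_edgeFinset]
    exact (Finset.card_le_card hcover).trans Finset.card_image_le
  calc (#{p : ι × ι | H.Adj p.1 p.2} : ℝ) ≤ 2 * #(H.comap f).edgeFinset := by exact_mod_cast hcard
    _ ≤ 2 * d * H.support.ncard := by linarith

variable {V ι : Type*} {G : SimpleGraph V} {E : ι → Set V} {x : ι → V} {r ω : ℕ}
  {A : ι → ι → Finset V}

/-- Each set `E i` with hub `x i` contains, for every `j ≠ i`, a small piece `A i j` centred at the
hub that is disjoint from `A j i` but joined to it by an edge. -/
structure IsSpurSystem (G : SimpleGraph V) (E : ι → Set V) (x : ι → V) (r : ℕ)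
    (A : ι → ι → Finset V) : Prop where
  subset : ∀ i j, i ≠ j → (A i j : Set V) ⊆ E i
  card_le : ∀ i j, i ≠ j → #(A i j) ≤ r + 1
  isCenter : ∀ i j, i ≠ j → IsCenter G (A i j) r (x i)
  disjoint : ∀ i j, i ≠ j → Disjoint (A i j) (A j i)
  exists_adj : ∀ i j, i ≠ j → ∃ u ∈ A i j, ∃ v ∈ A j i, G.Adj u v

theorem exists_isSpurSystem (hx : Function.Injective x)
    (htouch : ∀ i j, i ≠ j → ∃ y z, LinkedWithin G (E i) r (x i) y ∧
      LinkedWithin G (E j) r (x j) z ∧ Touches G y z) :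
    ∃ A, IsSpurSystem G E x r A := by
  obtain ⟨A, hA⟩ := exists_forall_ne_symm_choice
    (P := fun i j (F F' : Finset V) => (F : Set V) ⊆ E i ∧ (F' : Set V) ⊆ E j ∧ #F ≤ r + 1 ∧
      #F' ≤ r + 1 ∧ IsCenter G F r (x i) ∧ IsCenter G F' r (x j) ∧ Disjoint F F' ∧
      ∃ u ∈ F, ∃ v ∈ F', G.Adj u v)
    (fun i j F F' ⟨hE, hE', hr, hr', hx, hx', hd, u, hu, v, hv, h⟩ =>
      ⟨hE', hE, hr', hr, hx', hx, hd.symm, v, hv, u, hu, h.symm⟩)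
    (fun i j hij => by
      obtain ⟨y, z, hy, hz, hyz⟩ := htouch i j hij
      exact exists_disjoint_centered_finsets (hx.ne hij) hy hz hyz)
  exact ⟨A, fun i j h => (hA i j h).1, fun i j h => (hA i j h).2.2.1,
    fun i j h => (hA i j h).2.2.2.2.1, fun i j h => (hA i j h).2.2.2.2.2.2.1,
    fun i j h => (hA i j h).2.2.2.2.2.2.2⟩

variable [Fintype ι]

open Classical in
/-- The indices other than `i` and `j` whose sets meet the two pieces that join `i` to `j`. -/
noncomputable def conflicts (E : ι → Set V) (A : ι → ι → Finset V) (i j : ι) : Finset ι :=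
  {k | k ≠ i ∧ k ≠ j ∧ ∃ u ∈ A i j ∪ A j i, u ∈ E k}

theorem mem_conflicts {i j k : ι} :
    k ∈ conflicts E A i j ↔ k ≠ i ∧ k ≠ j ∧ ∃ u, (u ∈ A i j ∨ u ∈ A j i) ∧ u ∈ E k := by
  simp [conflicts]

theorem conflicts_comm (i j : ι) : conflicts E A i j = conflicts E A j i := by
  ext k
  simp only [mem_conflicts, or_comm, and_left_comm]

theorem IsSpurSystem.card_conflicts_le (hA : IsSpurSystem G E x r A)
    (hω : ∀ v, {i | v ∈ E i}.ncard ≤ ω) {i j : ι} (hij : i ≠ j) :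
    #(conflicts E A i j) ≤ 2 * (r + 1) * ω := by
  classical
  have hcover : conflicts E A i j ⊆ (A i j ∪ A j i).biUnion fun u => {k | u ∈ E k} := by
    intro k hk
    obtain ⟨-, -, u, hu, huk⟩ := mem_conflicts.1 hk
    exact Finset.mem_biUnion.2 ⟨u, Finset.mem_union.2 hu, by simpa using huk⟩
  have hply (u : V) : #{k | u ∈ E k} ≤ ω := by
    simpa [← Set.ncard_coe_finset] using hω u
  calc #(conflicts E A i j) ≤ #(A i j ∪ A j i) * ω :=
        (Finset.card_le_card hcover).trans (Finset.card_biUnion_le_card_mul _ _ _ fun u _ => hply u)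
    _ ≤ (#(A i j) + #(A j i)) * ω := Nat.mul_le_mul_right _ (Finset.card_union_le _ _)
    _ ≤ 2 * (r + 1) * ω := by
      have := hA.card_le i j hij
      have := hA.card_le j i hij.symm
      gcongr
      lia

/-- The graph on the sample `J` whose edges are the pairs without conflict inside `J`. -/
def spurGraph (E : ι → Set V) (A : ι → ι → Finset V) (J : Finset ι) : SimpleGraph ι where
  Adj i j := i ≠ j ∧ i ∈ J ∧ j ∈ J ∧ Disjoint (conflicts E A i j) J
  symm := ⟨fun i j ⟨hij, hi, hj, h⟩ => ⟨hij.symm, hj, hi, conflicts_comm i j ▸ h⟩⟩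
  loopless := ⟨fun _ h => h.1 rfl⟩

/-- The cluster contracted to the vertex `i` of `spurGraph E A J`: all pieces of its edges. -/
def spurCluster (E : ι → Set V) (A : ι → ι → Finset V) (J : Finset ι) (i : ι) : Set V :=
  {u | ∃ j, (spurGraph E A J).Adj i j ∧ u ∈ A i j}

variable {J : Finset ι}

theorem eq_of_spurGraph_adj {i j k : ι} {u : V} (hij : (spurGraph E A J).Adj i j)
    (hu : u ∈ A i j) (hk : k ∈ J) (hki : k ≠ i) (huk : u ∈ E k) : k = j := by
  by_contra hkj
  exact Finset.disjoint_left.1 hij.2.2.2 (mem_conflicts.2 ⟨hki, hkj, u, .inl hu, huk⟩) hk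

namespace IsSpurSystem

theorem disjoint_spurCluster (hA : IsSpurSystem G E x r A) {i j : ι} (hij : i ≠ j) :
    Disjoint (spurCluster E A J i) (spurCluster E A J j) := by
  refine Set.disjoint_left.2 ?_
  rintro u ⟨a, hia, hua⟩ ⟨b, hjb, hub⟩
  obtain rfl := eq_of_spurGraph_adj hia hua hjb.2.1 hij.symm (hA.subset _ _ hjb.1 hub)
  obtain rfl := eq_of_spurGraph_adj hjb hub hia.2.1 hij (hA.subset _ _ hia.1 hua)
  exact Finset.disjoint_left.1 (hA.disjoint _ _ hij) hua hub

theorem isCenter_spurCluster (hA : IsSpurSystem G E x r A) {i : ι}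
    (hi : i ∈ (spurGraph E A J).support) : IsCenter G (spurCluster E A J i) r (x i) := by
  obtain ⟨j, hij⟩ := hi
  refine isCenter_of_forall_mem ⟨j, hij, (hA.isCenter i j hij.1).1⟩ ?_
  rintro u ⟨k, hik, hu⟩
  exact ⟨A i k, fun v hv => ⟨k, hik, hv⟩, hu, hA.isCenter i k hik.1⟩

theorem card_filter_disjoint_conflicts_le [DecidableEq ι] (hA : IsSpurSystem G E x r A) {d : ℝ}
    (hd : 0 ≤ d) (hG : NablaLE G r d) :
    (#{p ∈ J.offDiag | Disjoint (conflicts E A p.1 p.2) J} : ℝ) ≤ 2 * d * #J := by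
  classical
  have hpairs : {p ∈ J.offDiag | Disjoint (conflicts E A p.1 p.2) J} =
      ({p | (spurGraph E A J).Adj p.1 p.2} : Finset (ι × ι)) := by
    ext p
    rw [Finset.mem_filter, Finset.mem_filter_univ, Finset.mem_offDiag]
    simp only [spurGraph]
    tauto
  have hsupport : (spurGraph E A J).support.ncard ≤ #J := by
    rw [← Set.ncard_coe_finset]
    exact Set.ncard_le_ncard fun i ⟨j, hij⟩ => hij.2.1
  rw [hpairs]
  calc _ ≤ 2 * d * (spurGraph E A J).support.ncard :=
        hG.card_filter_adj_le _ (spurCluster E A J) (fun i _ j _ => hA.disjoint_spurCluster)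
          (fun i hi => (hA.isCenter_spurCluster hi).isShallowGraph) fun i j hij => by
            obtain ⟨u, hu, v, hv, huv⟩ := hA.exists_adj i j hij.1
            exact ⟨u, ⟨j, hij, hu⟩, v, ⟨i, hij.symm, hv⟩, huv⟩
    _ ≤ 2 * d * #J := by gcongr

end IsSpurSystem

theorem NablaLE.card_le_of_pairwise_touching {d : ℝ} (hG : NablaLE G r d) (hd : 0 ≤ d)
    (hx : Function.Injective x) (hω : 0 < ω) (hply : ∀ v, {i | v ∈ E i}.ncard ≤ ω)
    (htouch : ∀ i j, i ≠ j → ∃ y z, LinkedWithin G (E i) r (x i) y ∧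
      LinkedWithin G (E j) r (x j) z ∧ Touches G y z) :
    (Fintype.card ι : ℝ) ≤ 1 + 16 * d * ((r + 1) * ω) := by
  classical
  obtain ⟨A, hA⟩ := exists_isSpurSystem hx htouch
  calc (Fintype.card ι : ℝ) ≤ 1 + 4 * d * (4 * (r + 1) * ω : ℕ) :=
        card_le_of_forall_card_offDiag_le _ (by positivity) (conflicts E A)
          (fun i j hij => by linarith [hA.card_conflicts_le hply hij])
          (fun i j h => (mem_conflicts.1 h).1 rfl) (fun i j h => (mem_conflicts.1 h).2.1 rfl) hd
          fun J => hA.card_filter_disjoint_conflicts_le hd hG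
    _ = 1 + 16 * d * ((r + 1) * ω) := by push_cast; ring

end Ply

section Expansion

variable {V : Type*} {H : SimpleGraph V} {U A B R : Finset V} {φ ψ M : ℝ} {v w y : V}

open Classical in
/-- The vertices of `U` outside `A` that have a neighbour in `A`. -/
noncomputable def outerBoundary (H : SimpleGraph V) (U A : Finset V) : Finset V :=
  {y ∈ U | y ∉ A ∧ ∃ x ∈ A, H.Adj x y}

/-- Every `A ⊆ U` with at most two thirds of the vertices of `U` has at least `ψ #A` neighbours in
`U` outside `A`. -/
def IsVertexExpander (H : SimpleGraph V) (U : Finset V) (ψ : ℝ) : Prop :=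
  ∀ A ⊆ U, 3 * #A ≤ 2 * #U → ψ * #A ≤ #(outerBoundary H U A)

theorem mem_outerBoundary :
    y ∈ outerBoundary H U A ↔ y ∈ U ∧ y ∉ A ∧ ∃ x ∈ A, H.Adj x y := by
  classical
  exact Finset.mem_filter

theorem outerBoundary_subset : outerBoundary H U A ⊆ U :=
  fun _ hy => (mem_outerBoundary.1 hy).1

theorem disjoint_outerBoundary : Disjoint A (outerBoundary H U A) :=
  Finset.disjoint_right.2 fun _ hy => (mem_outerBoundary.1 hy).2.1

theorem outerBoundary_union_subset [DecidableEq V] :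
    outerBoundary H U (A ∪ B) ⊆ outerBoundary H U A ∪ outerBoundary H (U \ A) B := by
  intro y
  simp only [mem_outerBoundary, Finset.mem_union, Finset.mem_sdiff]
  rintro ⟨hyU, hyAB, x, hx | hx, hxy⟩
  · exact .inl ⟨hyU, fun h => hyAB (.inl h), x, hx, hxy⟩
  · exact .inr ⟨⟨hyU, fun h => hyAB (.inl h)⟩, fun h => hyAB (.inr h), x, hx, hxy⟩

theorem outerBoundary_subset_union_sdiff [DecidableEq V] :
    outerBoundary H U A ⊆ B ∪ outerBoundary H (U \ B) A := by
  intro y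
  simp only [mem_outerBoundary, Finset.mem_union, Finset.mem_sdiff]
  tauto

theorem exists_ball_of_expansion (hφ : 0 ≤ φ)
    (hexp : ∀ A ⊆ R, #A ≤ M → φ * #A ≤ #(outerBoundary H R A)) (hv : v ∈ R) (n : ℕ) :
    ∃ A ⊆ R, (∀ y ∈ A, LinkedWithin H R n v y) ∧ (M < #A ∨ (1 + φ) ^ n ≤ #A) := by
  classical
  induction n with
  | zero =>
    refine ⟨{v}, by simpa using hv, fun y hy => ?_, .inr (by simp)⟩
    obtain rfl := Finset.mem_singleton.1 hy
    exact .refl hv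
  | succ n ih =>
    obtain ⟨A, hAR, hlink, hcard⟩ := ih
    by_cases hM : M < #A
    · exact ⟨A, hAR, fun y hy => (hlink y hy).mono subset_rfl n.le_succ, .inl hM⟩
    refine ⟨A ∪ outerBoundary H R A, Finset.union_subset hAR outerBoundary_subset,
      fun y hy => ?_, .inr ?_⟩
    · rcases Finset.mem_union.1 hy with hy | hy
      · exact (hlink y hy).mono subset_rfl n.le_succ
      · obtain ⟨hyR, -, x, hx, hxy⟩ := mem_outerBoundary.1 hy
        exact (hlink x hx).trans (Touches.linkedWithin (.inr hxy) (hAR hx) hyR)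
    · calc (1 + φ) ^ (n + 1) = (1 + φ) ^ n * (1 + φ) := pow_succ _ _
        _ ≤ #A * (1 + φ) := by gcongr; exact hcard.resolve_left hM
        _ = #A + φ * #A := by ring
        _ ≤ #A + #(outerBoundary H R A) := by gcongr; exact hexp A hAR (not_lt.1 hM)
        _ = #(A ∪ outerBoundary H R A) := by
          rw [Finset.card_union_of_disjoint disjoint_outerBoundary, Nat.cast_add]

theorem linkedWithin_of_expansion (hφ : 0 ≤ φ)
    (hexp : ∀ A ⊆ R, #A ≤ M → φ * #A ≤ #(outerBoundary H R A)) (hR : #R ≤ 2 * M) {ρ : ℕ}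
    (hρ : M < (1 + φ) ^ ρ) (hv : v ∈ R) (hw : w ∈ R) : LinkedWithin H R (2 * ρ) v w := by
  classical
  obtain ⟨A, hAR, hA, hcA⟩ := exists_ball_of_expansion hφ hexp hv ρ
  obtain ⟨B, hBR, hB, hcB⟩ := exists_ball_of_expansion hφ hexp hw ρ
  have hmeet : ¬Disjoint A B := by
    intro hdisj
    have hle : (#A : ℝ) + #B ≤ #R := by
      exact_mod_cast Finset.card_union_of_disjoint hdisj ▸
        Finset.card_le_card (Finset.union_subset hAR hBR)
    have hMA : M < #A := hcA.elim id hρ.trans_le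
    have hMB : M < #B := hcB.elim id hρ.trans_le
    linarith
  obtain ⟨y, hyA, hyB⟩ := Finset.not_disjoint_iff.1 hmeet
  exact two_mul ρ ▸ (hA y hyA).trans (hB y hyB).symm

end Expansion

section CliqueSearch

variable {V : Type*} {H : SimpleGraph V} {U T A N : Finset V} {ψ : ℝ} {h ρ : ℕ}
  {𝒞 : Finset (Finset V)} {C : Finset V}

/-- The clusters in `𝒞` are the branch sets of a complete graph as an `r`-shallow minor. -/
structure IsCliqueModel (H : SimpleGraph V) (r : ℕ) (𝒞 : Finset (Finset V)) : Prop where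
  exists_isCenter : ∀ C ∈ 𝒞, ∃ x, IsCenter H C r x
  disjoint : ∀ C ∈ 𝒞, ∀ C' ∈ 𝒞, C ≠ C' → Disjoint C C'
  exists_adj : ∀ C ∈ 𝒞, ∀ C' ∈ 𝒞, C ≠ C' → ∃ u ∈ C, ∃ v ∈ C', H.Adj u v

theorem IsCliqueModel.subset {r : ℕ} {𝒞' : Finset (Finset V)} (h𝒞 : IsCliqueModel H r 𝒞)
    (hsub : 𝒞' ⊆ 𝒞) : IsCliqueModel H r 𝒞' :=
  ⟨fun C hC => h𝒞.exists_isCenter C (hsub hC),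
    fun C hC C' hC' => h𝒞.disjoint C (hsub hC) C' (hsub hC'),
    fun C hC C' hC' => h𝒞.exists_adj C (hsub hC) C' (hsub hC')⟩

variable [DecidableEq V]

theorem IsCliqueModel.insert {r : ℕ} (h𝒞 : IsCliqueModel H r 𝒞) (hN : ∃ x, IsCenter H N r x)
    (hdisj : ∀ C ∈ 𝒞, Disjoint N C) (hadj : ∀ C ∈ 𝒞, ∃ u ∈ N, ∃ v ∈ C, H.Adj u v) :
    IsCliqueModel H r (insert N 𝒞) := by
  refine ⟨Finset.forall_mem_insert .. |>.2 ⟨hN, h𝒞.exists_isCenter⟩, ?_, ?_⟩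
  · simp only [Finset.forall_mem_insert]
    refine ⟨⟨fun h => absurd rfl h, fun C hC _ => hdisj C hC⟩, fun C hC => ⟨fun _ => ?_, ?_⟩⟩
    · exact (hdisj C hC).symm
    · exact h𝒞.disjoint C hC
  · simp only [Finset.forall_mem_insert]
    refine ⟨⟨fun h => absurd rfl h, fun C hC _ => hadj C hC⟩, fun C hC => ⟨fun _ => ?_, ?_⟩⟩
    · obtain ⟨u, hu, v, hv, huv⟩ := hadj C hC
      exact ⟨v, hv, u, hu, huv.symm⟩
    · exact h𝒞.exists_adj C hC

/-- The vertices of `U` neither in a cluster of `𝒞` nor in `T`. -/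
def remainder (U : Finset V) (𝒞 : Finset (Finset V)) (T : Finset V) : Finset V :=
  (U \ 𝒞.biUnion id) \ T

/-- A state of the search for a shallow clique minor with `h` branch sets in the subgraph induced
on `U`: the branch sets `𝒞` found so far, and a set `T` of discarded vertices with few neighbours
outside `T` and the branch sets. -/
structure IsSearchState (H : SimpleGraph V) (U : Finset V) (ψ : ℝ) (h ρ : ℕ)
    (𝒞 : Finset (Finset V)) (T : Finset V) : Prop extends IsCliqueModel H (2 * ρ) 𝒞 where
  cluster_subset : ∀ C ∈ 𝒞, C ⊆ U
  card_cluster_le : ∀ C ∈ 𝒞, #C ≤ h * (2 * ρ + 1)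
  card_le : #𝒞 ≤ h
  waste_subset : T ⊆ U
  disjoint_waste : ∀ C ∈ 𝒞, Disjoint T C
  card_waste_le : 3 * #T ≤ 2 * #U
  card_outerBoundary_le : #(outerBoundary H (U \ 𝒞.biUnion id) T) ≤ ψ / 2 * #T

theorem mem_remainder {y : V} :
    y ∈ remainder U 𝒞 T ↔ y ∈ U ∧ (∀ C ∈ 𝒞, y ∉ C) ∧ y ∉ T := by
  simp [remainder, and_assoc]

theorem disjoint_remainder (hC : C ∈ 𝒞) : Disjoint (remainder U 𝒞 T) C :=
  Finset.disjoint_left.2 fun _ hy => (mem_remainder.1 hy).2.1 C hC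

namespace IsSearchState

theorem empty : IsSearchState H U ψ h ρ ∅ ∅ where
  exists_isCenter := by simp
  disjoint := by simp
  exists_adj := by simp
  cluster_subset := by simp
  card_cluster_le := by simp
  card_le := by simp
  waste_subset := by simp
  disjoint_waste := by simp
  card_waste_le := by simp
  card_outerBoundary_le := by simp [outerBoundary]

theorem discard_cluster (hs : IsSearchState H U ψ h ρ 𝒞 T) (hψ : 0 ≤ ψ) (hC : C ∈ 𝒞)
    (hno : ∀ u ∈ C, ∀ y ∈ remainder U 𝒞 T, ¬H.Adj u y) (hcard : 3 * (#T + #C) ≤ 2 * #U) :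
    IsSearchState H U ψ h ρ (𝒞.erase C) (T ∪ C) where
  toIsCliqueModel := hs.toIsCliqueModel.subset (𝒞.erase_subset C)
  cluster_subset C' hC' := hs.cluster_subset C' (Finset.mem_of_mem_erase hC')
  card_cluster_le C' hC' := hs.card_cluster_le C' (Finset.mem_of_mem_erase hC')
  card_le := Finset.card_erase_le.trans hs.card_le
  waste_subset := Finset.union_subset hs.waste_subset (hs.cluster_subset C hC)
  disjoint_waste C' hC' := Finset.disjoint_union_left.2
    ⟨hs.disjoint_waste C' (Finset.mem_of_mem_erase hC'),
      hs.disjoint C hC C' (Finset.mem_of_mem_erase hC') (Finset.ne_of_mem_erase hC').symm⟩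
  card_waste_le := by rwa [Finset.card_union_of_disjoint (hs.disjoint_waste C hC)]
  card_outerBoundary_le := by
    have hsub : outerBoundary H (U \ (𝒞.erase C).biUnion id) (T ∪ C) ⊆
        outerBoundary H (U \ 𝒞.biUnion id) T := by
      intro y hy
      simp only [mem_outerBoundary, Finset.mem_sdiff, Finset.mem_biUnion, Finset.mem_erase, id,
        Finset.mem_union, not_exists, not_and, not_or] at hy ⊢
      obtain ⟨⟨hyU, hy𝒞⟩, ⟨hyT, hyC⟩, x, hx, hxy⟩ := hy
      have hy𝒞' (C' : Finset V) (hC' : C' ∈ 𝒞) : y ∉ C' := by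
        by_cases h : C' = C
        · exact h ▸ hyC
        · exact hy𝒞 C' ⟨h, hC'⟩
      have hxC : x ∉ C := fun hxC => hno x hxC y (mem_remainder.2 ⟨hyU, hy𝒞', hyT⟩) hxy
      exact ⟨⟨hyU, hy𝒞'⟩, hyT, x, hx.resolve_right hxC, hxy⟩
    calc (#(outerBoundary H (U \ (𝒞.erase C).biUnion id) (T ∪ C)) : ℝ) ≤ ψ / 2 * #T :=
          le_trans (by exact_mod_cast Finset.card_le_card hsub) hs.card_outerBoundary_le
      _ ≤ ψ / 2 * #(T ∪ C) := by gcongr; exact Finset.subset_union_left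

theorem discard (hs : IsSearchState H U ψ h ρ 𝒞 T) (hA : A ⊆ remainder U 𝒞 T)
    (hbd : #(outerBoundary H (remainder U 𝒞 T) A) ≤ ψ / 2 * #A)
    (hcard : 3 * (#T + #A) ≤ 2 * #U) : IsSearchState H U ψ h ρ 𝒞 (T ∪ A) := by
  have hTA : Disjoint T A := Finset.disjoint_right.2 fun y hy => (mem_remainder.1 (hA hy)).2.2
  refine { hs with waste_subset := ?_, disjoint_waste := ?_, card_waste_le := ?_,
                   card_outerBoundary_le := ?_ }
  · exact Finset.union_subset hs.waste_subset fun y hy => (mem_remainder.1 (hA hy)).1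
  · exact fun C hC => Finset.disjoint_union_left.2
      ⟨hs.disjoint_waste C hC, (disjoint_remainder hC).mono_left hA⟩
  · rwa [Finset.card_union_of_disjoint hTA]
  · have hle : (#(outerBoundary H (U \ 𝒞.biUnion id) (T ∪ A)) : ℝ) ≤
        #(outerBoundary H (U \ 𝒞.biUnion id) T) + #(outerBoundary H (remainder U 𝒞 T) A) := by
      exact_mod_cast (Finset.card_le_card outerBoundary_union_subset).trans
        (Finset.card_union_le _ _)
    rw [Finset.card_union_of_disjoint hTA]
    push_cast
    linarith [hs.card_outerBoundary_le]

theorem insert_cluster (hs : IsSearchState H U ψ h ρ 𝒞 T) (hN : N ⊆ remainder U 𝒞 T)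
    (hcard : #N ≤ h * (2 * ρ + 1)) (hx : ∃ x, IsCenter H N (2 * ρ) x)
    (hadj : ∀ C ∈ 𝒞, ∃ u ∈ N, ∃ v ∈ C, H.Adj u v) (hlt : #𝒞 < h) :
    IsSearchState H U ψ h ρ (insert N 𝒞) T where
  toIsCliqueModel :=
    hs.toIsCliqueModel.insert hx (fun _ hC => (disjoint_remainder hC).mono_left hN) hadj
  cluster_subset := (Finset.forall_mem_insert ..).2
    ⟨fun _ hy => (mem_remainder.1 (hN hy)).1, hs.cluster_subset⟩
  card_cluster_le := (Finset.forall_mem_insert ..).2 ⟨hcard, hs.card_cluster_le⟩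
  card_le := (Finset.card_insert_le _ _).trans hlt
  waste_subset := hs.waste_subset
  disjoint_waste := (Finset.forall_mem_insert ..).2
    ⟨Finset.disjoint_right.2 fun _ hy => (mem_remainder.1 (hN hy)).2.2, hs.disjoint_waste⟩
  card_waste_le := hs.card_waste_le
  card_outerBoundary_le := by
    refine le_trans ?_ hs.card_outerBoundary_le
    refine Nat.cast_le.2 (Finset.card_le_card fun y => ?_)
    simp only [mem_outerBoundary, Finset.mem_sdiff, Finset.biUnion_insert, Finset.mem_union]
    tauto

theorem card_biUnion_le (hs : IsSearchState H U ψ h ρ 𝒞 T) :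
    #(𝒞.biUnion id) ≤ h ^ 2 * (2 * ρ + 1) :=
  calc #(𝒞.biUnion id) ≤ #𝒞 * (h * (2 * ρ + 1)) :=
        Finset.card_biUnion_le_card_mul _ _ _ hs.card_cluster_le
    _ ≤ h * (h * (2 * ρ + 1)) := Nat.mul_le_mul_right _ hs.card_le
    _ = h ^ 2 * (2 * ρ + 1) := by ring

theorem card_waste_le_of_isVertexExpander (hs : IsSearchState H U ψ h ρ 𝒞 T) (hψ : 0 < ψ)
    (hU : IsVertexExpander H U ψ) (hsize : 24 * (h : ℝ) ^ 2 * (2 * ρ + 1) ≤ ψ * #U) :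
    12 * #T ≤ #U := by
  have hsplit : (#(outerBoundary H U T) : ℝ) ≤
      #(𝒞.biUnion id) + #(outerBoundary H (U \ 𝒞.biUnion id) T) := by
    exact_mod_cast (Finset.card_le_card outerBoundary_subset_union_sdiff).trans
      (Finset.card_union_le _ _)
  have hclusters : (#(𝒞.biUnion id) : ℝ) ≤ h ^ 2 * (2 * ρ + 1) := by
    exact_mod_cast hs.card_biUnion_le
  have hexp := hU T hs.waste_subset hs.card_waste_le
  have : ψ * (12 * #T) ≤ ψ * #U := by linarith [hs.card_outerBoundary_le]
  exact_mod_cast le_of_mul_le_mul_left this hψ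

end IsSearchState

/-- A search state that is lexicographically maximal in the number of discarded vertices and the
number of branch sets; at most `h` branch sets occur, whence the weight `h + 1`. -/
structure IsMaxSearchState (H : SimpleGraph V) (U : Finset V) (ψ : ℝ) (h ρ : ℕ)
    (𝒞 : Finset (Finset V)) (T : Finset V) : Prop extends IsSearchState H U ψ h ρ 𝒞 T where
  le_of_isSearchState : ∀ 𝒞' T', IsSearchState H U ψ h ρ 𝒞' T' →
    #T' * (h + 1) + #𝒞' ≤ #T * (h + 1) + #𝒞

theorem exists_isMaxSearchState (H : SimpleGraph V) (U : Finset V) (ψ : ℝ) (h ρ : ℕ) :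
    ∃ 𝒞 T, IsMaxSearchState H U ψ h ρ 𝒞 T := by
  classical
  let states := {s ∈ U.powerset.powerset ×ˢ U.powerset | IsSearchState H U ψ h ρ s.1 s.2}
  have hmem {𝒞 T} (hs : IsSearchState H U ψ h ρ 𝒞 T) : (𝒞, T) ∈ states := by
    simp only [states, Finset.mem_filter, Finset.mem_product, Finset.mem_powerset]
    exact ⟨⟨fun C hC => Finset.mem_powerset.2 (hs.cluster_subset C hC), hs.waste_subset⟩, hs⟩
  obtain ⟨⟨𝒞, T⟩, hs, hmax⟩ := Finset.exists_max_image states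
    (fun s => #s.2 * (h + 1) + #s.1) ⟨_, hmem .empty⟩
  exact ⟨𝒞, T, (Finset.mem_filter.1 hs).2, fun 𝒞' T' hs' => hmax _ (hmem hs')⟩

namespace IsMaxSearchState

theorem exists_adj_remainder (hs : IsMaxSearchState H U ψ h ρ 𝒞 T) (hψ : 0 ≤ ψ)
    (hT : 12 * #T ≤ #U) (hsize : 24 * h ^ 2 * (2 * ρ + 1) ≤ #U) (hC : C ∈ 𝒞) :
    ∃ u ∈ C, ∃ y ∈ remainder U 𝒞 T, H.Adj u y := by
  by_contra! hno
  obtain ⟨x, hx⟩ := hs.exists_isCenter C hC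
  have hpos : 0 < #C := Finset.card_pos.2 ⟨x, hx.1⟩
  have hh : 0 < #𝒞 := Finset.card_pos.2 ⟨C, hC⟩
  have hCU : 24 * #C ≤ #U := by
    have := hs.card_cluster_le C hC
    have := hs.card_le
    nlinarith
  have hmax := hs.le_of_isSearchState _ _
    (hs.toIsSearchState.discard_cluster hψ hC hno (by lia))
  rw [Finset.card_union_of_disjoint (hs.disjoint_waste C hC), Finset.card_erase_of_mem hC] at hmax
  have := hs.card_le
  have : h + 1 ≤ #C * (h + 1) := Nat.le_mul_of_pos_left _ hpos
  lia

theorem mul_card_le_card_outerBoundary (hs : IsMaxSearchState H U ψ h ρ 𝒞 T)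
    (hT : 12 * #T ≤ #U) (hA : A ⊆ remainder U 𝒞 T) (hAU : 12 * #A ≤ 7 * #U) :
    ψ / 2 * #A ≤ #(outerBoundary H (remainder U 𝒞 T) A) := by
  by_contra! hlt
  have hpos : 0 < #A := by
    by_contra! h0
    rw [Nat.le_zero.1 h0] at hlt
    simp only [Nat.cast_zero, mul_zero] at hlt
    exact (Nat.cast_nonneg _).not_gt hlt
  have hTA : Disjoint T A := Finset.disjoint_right.2 fun y hy => (mem_remainder.1 (hA hy)).2.2
  have hmax := hs.le_of_isSearchState _ _ (hs.toIsSearchState.discard hA hlt.le (by lia))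
  rw [Finset.card_union_of_disjoint hTA] at hmax
  nlinarith

theorem linkedWithin_remainder (hs : IsMaxSearchState H U ψ h ρ 𝒞 T) (hψ : 0 ≤ ψ)
    (hT : 12 * #T ≤ #U) (hρ : #U < (1 + ψ / 2) ^ ρ) {v w : V} (hv : v ∈ remainder U 𝒞 T)
    (hw : w ∈ remainder U 𝒞 T) : LinkedWithin H (remainder U 𝒞 T) (2 * ρ) v w := by
  have hRU : (#(remainder U 𝒞 T) : ℝ) ≤ #U :=
    Nat.cast_le.2 (Finset.card_le_card fun y hy => (mem_remainder.1 hy).1)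
  have : (0 : ℝ) ≤ #U := Nat.cast_nonneg _
  refine linkedWithin_of_expansion (φ := ψ / 2) (M := 7 / 12 * #U) (by linarith)
    (fun A hA hAU => ?_) (by linarith) (by linarith) hv hw
  refine hs.mul_card_le_card_outerBoundary hT hA ?_
  have : (12 * #A : ℝ) ≤ 7 * #U := by linarith
  exact_mod_cast this

theorem exists_branch_set (hs : IsMaxSearchState H U ψ h ρ 𝒞 T) (hψ : 0 ≤ ψ)
    (hT : 12 * #T ≤ #U) (hsize : 24 * h ^ 2 * (2 * ρ + 1) ≤ #U) (hρ : #U < (1 + ψ / 2) ^ ρ)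
    {v : V} (hv : v ∈ remainder U 𝒞 T) :
    ∃ N ⊆ remainder U 𝒞 T, #N ≤ 1 + #𝒞 * (2 * ρ + 1) ∧ IsCenter H N (2 * ρ) v ∧
      ∀ C ∈ 𝒞, ∃ u ∈ N, ∃ w ∈ C, H.Adj u w := by
  have hspoke (C) (hC : C ∈ 𝒞) : ∃ F ⊆ remainder U 𝒞 T, #F ≤ 2 * ρ + 1 ∧
      IsCenter H F (2 * ρ) v ∧ ∃ u ∈ F, ∃ w ∈ C, H.Adj u w := by
    obtain ⟨w, hwC, u, hu, hwu⟩ := hs.exists_adj_remainder hψ hT hsize hC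
    obtain ⟨F, hFR, huF, hF, hc⟩ := (hs.linkedWithin_remainder hψ hT hρ hv hu).exists_finset
    exact ⟨F, by exact_mod_cast hFR, hF, hc, u, huF, w, hwC, hwu.symm⟩
  choose! F hFR hFcard hFv hFC using hspoke
  have hFN (C) (hC : C ∈ 𝒞) : F C ⊆ insert v (𝒞.biUnion F) :=
    (Finset.subset_biUnion_of_mem F hC).trans (Finset.subset_insert _ _)
  refine ⟨insert v (𝒞.biUnion F), Finset.insert_subset hv (Finset.biUnion_subset.2 hFR), ?_, ?_, ?_⟩
  · rw [add_comm]
    exact (Finset.card_insert_le _ _).trans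
      (Nat.add_le_add_right (Finset.card_biUnion_le_card_mul _ _ _ hFcard) 1)
  · refine isCenter_of_forall_mem (by simp) fun u hu => ?_
    rcases Finset.mem_insert.1 hu with rfl | hu
    · refine ⟨{u}, by simp, rfl, rfl, ?_⟩
      rintro _ rfl
      exact .mono subset_rfl (Nat.zero_le _) (.refl rfl)
    · obtain ⟨C, hC, hu⟩ := Finset.mem_biUnion.1 hu
      exact ⟨F C, Finset.coe_subset.2 (hFN C hC), hu, hFv C hC⟩
  · intro C hC
    obtain ⟨u, hu, huw⟩ := hFC C hC
    exact ⟨u, hFN C hC hu, huw⟩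

theorem card_eq (hs : IsMaxSearchState H U ψ h ρ 𝒞 T) (hψ : 0 ≤ ψ) (hT : 12 * #T ≤ #U)
    (hsize : 24 * h ^ 2 * (2 * ρ + 1) ≤ #U) (hρ : #U < (1 + ψ / 2) ^ ρ) : #𝒞 = h := by
  refine hs.card_le.antisymm (not_lt.1 fun hlt => ?_)
  have hrem : (remainder U 𝒞 T).Nonempty := by
    have h₁ := Finset.le_card_sdiff (𝒞.biUnion id) U
    have h₂ := Finset.le_card_sdiff T (U \ 𝒞.biUnion id)
    have := hs.card_biUnion_le
    refine Finset.card_pos.1 (lt_of_lt_of_le ?_ h₂)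
    have : 0 < h ^ 2 * (2 * ρ + 1) := by have := Nat.zero_lt_of_lt hlt; positivity
    lia
  obtain ⟨v, hv⟩ := hrem
  obtain ⟨N, hN, hNcard, hNv, hNadj⟩ := hs.exists_branch_set hψ hT hsize hρ hv
  have hNnotMem : N ∉ 𝒞 := fun h =>
    Finset.disjoint_left.1 (disjoint_remainder h) (hN hNv.1) hNv.1
  have hNcard' : #N ≤ h * (2 * ρ + 1) := by nlinarith
  have hmax := hs.le_of_isSearchState _ _
    (hs.toIsSearchState.insert_cluster hN hNcard' ⟨v, hNv⟩ hNadj hlt)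
  rw [Finset.card_insert_of_notMem hNnotMem] at hmax
  lia

end IsMaxSearchState

end CliqueSearch

theorem IsVertexExpander.exists_isCliqueModel {V : Type*} {H : SimpleGraph V} {U : Finset V}
    {ψ : ℝ} {h ρ : ℕ} (hU : IsVertexExpander H U ψ) (hψ : 0 < ψ) (hψ₁ : ψ ≤ 1)
    (hρ : #U < (1 + ψ / 2) ^ ρ) (hsize : 24 * (h : ℝ) ^ 2 * (2 * ρ + 1) ≤ ψ * #U) :
    ∃ 𝒞, #𝒞 = h ∧ IsCliqueModel H (2 * ρ) 𝒞 := by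
  classical
  obtain ⟨𝒞, T, hs⟩ := exists_isMaxSearchState H U ψ h ρ
  have hT := hs.card_waste_le_of_isVertexExpander hψ hU hsize
  have hsize' : 24 * h ^ 2 * (2 * ρ + 1) ≤ #U := by
    have : 24 * (h : ℝ) ^ 2 * (2 * ρ + 1) ≤ #U :=
      hsize.trans (mul_le_of_le_one_left (Nat.cast_nonneg _) hψ₁)
    exact_mod_cast this
  exact ⟨𝒞, hs.card_eq hψ.le hT hsize' hρ, hs.toIsCliqueModel⟩

section ExchangeGraph

variable {V : Type*} {G : SimpleGraph V} {c : V → Finset V} {C : Set V} {x y : V} {n Δ : ℕ}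

/-- Suppose that the vertices in `c v` meet the demand of `v`. The edges are those of `G` together
with the pairs `x, y` such that deleting `x` may violate the demand of a vertex `v` that `y` could
compensate. -/
def exchangeGraph (G : SimpleGraph V) (c : V → Finset V) : SimpleGraph V :=
  .fromRel fun x y => G.Adj x y ∨ ∃ v, x ∈ c v ∧ Touches G y v

/-- The cluster `C` of the exchange graph extended by the vertices that its edges pass through. -/
def exchangeHull (c : V → Finset V) (C : Set V) : Set V := {v | v ∈ C ∨ ∃ l ∈ c v, l ∈ C}

theorem exists_touches_of_exchangeGraph_adj (hc : ∀ v, ∀ l ∈ c v, Touches G l v) {C' : Set V}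
    (hx : x ∈ C) (hy : y ∈ C') (h : (exchangeGraph G c).Adj x y) :
    ∃ u v, LinkedWithin G (exchangeHull c C) 1 x u ∧ LinkedWithin G (exchangeHull c C') 1 y v ∧
      Touches G u v := by
  obtain ⟨-, (h | ⟨v, hxv, hyv⟩) | (h | ⟨v, hyv, hxv⟩)⟩ := (SimpleGraph.fromRel_adj ..).1 h
  · exact ⟨x, y, .refl (.inl hx), .refl (.inl hy), .inr h⟩
  · exact ⟨v, y, (hc v x hxv).linkedWithin (.inl hx) (.inr ⟨x, hxv, hx⟩), .refl (.inl hy), hyv.symm⟩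
  · exact ⟨x, y, .refl (.inl hx), .refl (.inl hy), .inr h.symm⟩
  · exact ⟨x, v, .refl (.inl hx), (hc v y hyv).linkedWithin (.inl hy) (.inr ⟨y, hyv, hy⟩), hxv⟩

theorem LinkedWithin.of_exchangeGraph (hc : ∀ v, ∀ l ∈ c v, Touches G l v)
    (h : LinkedWithin (exchangeGraph G c) C n x y) :
    LinkedWithin G (exchangeHull c C) (3 * n) x y := by
  have of_adj {x y : V} (hx : x ∈ C) (hy : y ∈ C) (hxy : (exchangeGraph G c).Adj x y) :
      LinkedWithin G (exchangeHull c C) 3 x y := by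
    obtain ⟨u, v, hxu, hyv, huv⟩ := exists_touches_of_exchangeGraph_adj hc hx hy hxy
    exact (hxu.trans (huv.linkedWithin hxu.right_mem hyv.right_mem)).trans hyv.symm
  obtain ⟨w, hn, hC⟩ := h
  refine LinkedWithin.mono subset_rfl (Nat.mul_le_mul_left 3 hn) ?_
  clear hn
  induction w with
  | nil => exact .refl (.inl (hC _ (by simp)))
  | @cons x u y hxu w ih =>
    have hw : ∀ v ∈ w.support, v ∈ C := fun v hv => hC v (by simp [hv])
    rw [SimpleGraph.Walk.length_cons, mul_add, mul_one, add_comm]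
    exact (of_adj (hC x (by simp)) (hw u w.start_mem_support) hxu).trans (ih hw)

theorem ncard_setOf_mem_exchangeHull_le {𝒞 : Finset (Finset V)}
    (hdisj : ∀ C ∈ 𝒞, ∀ C' ∈ 𝒞, C ≠ C' → Disjoint C C') (v : V) (hcard : #(c v) ≤ Δ) :
    {C : 𝒞 | v ∈ exchangeHull c (C : Finset V)}.ncard ≤ Δ + 1 := by
  classical
  have hmem (C : 𝒞) (hC : v ∈ exchangeHull c (C : Finset V)) : ∃ l ∈ insert v (c v), l ∈ C.1 := by
    rcases hC with hC | ⟨l, hl, hlC⟩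
    · exact ⟨v, Finset.mem_insert_self _ _, hC⟩
    · exact ⟨l, Finset.mem_insert_of_mem hl, hlC⟩
  have : Nonempty V := ⟨v⟩
  choose! l hl hlC using hmem
  have hinj : Set.InjOn l {C : 𝒞 | v ∈ exchangeHull c (C : Finset V)} := by
    intro C hC C' hC' h
    by_contra hne
    exact Finset.disjoint_left.1 (hdisj C C.2 C' C'.2 (Subtype.coe_ne_coe.2 hne)) (hlC C hC)
      (h ▸ hlC C' hC')
  calc _ ≤ (insert v (c v) : Set V).ncard := by
        refine Set.ncard_le_ncard_of_injOn l (fun C hC => ?_) hinj (Set.toFinite _)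
        simpa using hl C hC
    _ ≤ (c v : Set V).ncard + 1 := Set.ncard_insert_le _ _
    _ ≤ Δ + 1 := by simpa using hcard

theorem IsCliqueModel.card_le_of_nablaLE {𝒞 : Finset (Finset V)} {R : ℕ} {d : ℝ}
    (h𝒞 : IsCliqueModel (exchangeGraph G c) R 𝒞) (hc : ∀ v, ∀ l ∈ c v, Touches G l v)
    (hcard : ∀ v, #(c v) ≤ Δ) (hG : NablaLE G (3 * R + 1) d) (hd : 0 ≤ d) :
    (#𝒞 : ℝ) ≤ 1 + 16 * d * (((3 * R + 1 : ℕ) + 1) * (Δ + 1 : ℕ)) := by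
  choose x hx using fun C : 𝒞 => h𝒞.exists_isCenter C C.2
  have hinj : Function.Injective x := by
    intro C C' h
    by_contra hne
    exact Finset.disjoint_left.1 (h𝒞.disjoint C C.2 C' C'.2 (Subtype.coe_ne_coe.2 hne))
      (hx C).1 (h ▸ (hx C').1)
  rw [← Fintype.card_coe]
  refine hG.card_le_of_pairwise_touching (E := fun C : 𝒞 => exchangeHull c C.1) hd hinj
    Δ.succ_pos (fun v => ncard_setOf_mem_exchangeHull_le h𝒞.disjoint v (hcard v))
    fun C C' hne => ?_
  obtain ⟨u, hu, u', hu', huu'⟩ := h𝒞.exists_adj C C.2 C' C'.2 (Subtype.coe_ne_coe.2 hne)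
  obtain ⟨y, z, huy, hu'z, hyz⟩ := exists_touches_of_exchangeGraph_adj hc hu hu' huu'
  exact ⟨y, z, (((hx C).2 u hu).of_exchangeGraph hc).trans huy,
    (((hx C').2 u' hu').of_exchangeGraph hc).trans hu'z, hyz⟩

end ExchangeGraph

section SparseCuts

theorem exists_log_two_pow_le_mul_sq (p s : ℕ) :
    ∃ B : ℝ, 1 ≤ B ∧ ∀ (N : ℕ) (x : ℝ), 1 ≤ x → x ^ p = N →
      (Nat.log 2 N + 1 : ℝ) ^ (s + 1) ≤ B * x ^ 2 := by
  have : 0 < Real.log 2 := Real.log_pos one_lt_two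
  set η : ℝ := 2 / (s + 1) with hη
  set b : ℝ := p / (η * Real.log 2)
  have hη₀ : 0 < η := by positivity
  have hb : 0 ≤ b := by positivity
  refine ⟨(b + 1) ^ (s + 1), one_le_pow₀ (by linarith), fun N x hx hN => ?_⟩
  have hx₀ : 0 ≤ x := zero_le_one.trans hx
  have hlog : (Nat.log 2 N : ℝ) ≤ b * x ^ η :=
    calc (Nat.log 2 N : ℝ) ≤ Real.logb 2 N := by exact_mod_cast Real.natLog_le_logb N 2
      _ = p * Real.log x / Real.log 2 := by rw [← hN, Real.logb, Real.log_pow]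
      _ ≤ p * (x ^ η / η) / Real.log 2 := by gcongr; exact Real.log_le_rpow_div hx₀ hη₀
      _ = b * x ^ η := by simp only [b]; field_simp
  calc (Nat.log 2 N + 1 : ℝ) ^ (s + 1) ≤ ((b + 1) * x ^ η) ^ (s + 1) := by
        gcongr
        rw [add_mul, one_mul]
        exact add_le_add hlog (Real.one_le_rpow hx hη₀.le)
    _ = (b + 1) ^ (s + 1) * x ^ 2 := by
        rw [mul_pow, ← Real.rpow_natCast (x ^ η), ← Real.rpow_mul hx₀, hη, Nat.cast_succ,
          div_mul_cancel₀ _ (by positivity), Real.rpow_two]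

theorem exists_natCast_lt_one_add_half_pow {ψ : ℝ} (hψ : 0 < ψ) (hψ₁ : ψ ≤ 1) (N : ℕ) :
    ∃ ρ : ℕ, 1 ≤ ρ ∧ (N : ℝ) < (1 + ψ / 2) ^ ρ ∧ ρ ≤ 3 / ψ * (Nat.log 2 N + 1) := by
  set q := ⌈2 / ψ⌉₊
  have hq : 1 ≤ q := Nat.ceil_pos.2 (by positivity)
  have hdouble : (2 : ℝ) ≤ (1 + ψ / 2) ^ q :=
    calc (2 : ℝ) = 1 + 2 / ψ * (ψ / 2) := by field_simp; norm_num
      _ ≤ 1 + q * (ψ / 2) := by gcongr; exact Nat.le_ceil _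
      _ ≤ (1 + ψ / 2) ^ q := one_add_mul_le_pow (by linarith) q
  refine ⟨q * (Nat.log 2 N + 1), Nat.mul_pos hq (Nat.succ_pos _), ?_, ?_⟩
  · calc (N : ℝ) < 2 ^ (Nat.log 2 N + 1) := by
          exact_mod_cast Nat.lt_pow_succ_log_self one_lt_two N
      _ ≤ ((1 + ψ / 2) ^ q) ^ (Nat.log 2 N + 1) := by gcongr
      _ = (1 + ψ / 2) ^ (q * (Nat.log 2 N + 1)) := (pow_mul _ _ _).symm
  · push_cast
    gcongr
    calc (q : ℝ) ≤ 2 / ψ + 1 := (Nat.ceil_lt_add_one (by positivity)).le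
      _ ≤ 2 / ψ + 1 / ψ := by gcongr; exact (one_le_div hψ).2 hψ₁
      _ = 3 / ψ := by ring

variable {V : Type*} {H : SimpleGraph V} {U : Finset V} {a ψ : ℝ} {m : ℕ}

theorem IsVertexExpander.pow_mul_card_lt (hU : IsVertexExpander H U ψ) (hψ : 0 < ψ) (hψ₁ : ψ ≤ 1)
    (ha : 0 ≤ a) (hH : ∀ r 𝒞, IsCliqueModel H r 𝒞 → #𝒞 ≤ a * (r + 1 : ℝ) ^ m) :
    ψ ^ (2 * m + 2) * #U <
      72 * (a * 3 ^ m + 1) ^ 2 * 3 ^ (2 * m + 1) * (Nat.log 2 #U + 1 : ℝ) ^ (2 * m + 1) := by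
  by_contra! hsize
  obtain ⟨ρ, hρ₁, hρ, hρle⟩ := exists_natCast_lt_one_add_half_pow hψ hψ₁ #U
  have hρ₁' : (1 : ℝ) ≤ ρ := Nat.one_le_cast.2 hρ₁
  set h := ⌊a * (3 * ρ : ℝ) ^ m⌋₊ + 1
  have hh : (h : ℝ) ≤ (a * 3 ^ m + 1) * ρ ^ m :=
    calc (h : ℝ) ≤ a * (3 * ρ : ℝ) ^ m + 1 := by
          push_cast [h]
          gcongr
          exact Nat.floor_le (by positivity)
      _ ≤ a * (3 * ρ : ℝ) ^ m + ρ ^ m := by gcongr; exact one_le_pow₀ hρ₁'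
      _ = (a * 3 ^ m + 1) * ρ ^ m := by ring
  obtain ⟨𝒞, hcard, h𝒞⟩ := hU.exists_isCliqueModel (h := h) hψ hψ₁ hρ <|
    calc 24 * (h : ℝ) ^ 2 * (2 * ρ + 1)
        ≤ 24 * ((a * 3 ^ m + 1) * ρ ^ m) ^ 2 * (3 * ρ) := by gcongr; linarith
      _ = 72 * (a * 3 ^ m + 1) ^ 2 * (ρ : ℝ) ^ (2 * m + 1) := by ring
      _ ≤ 72 * (a * 3 ^ m + 1) ^ 2 * (3 / ψ * (Nat.log 2 #U + 1)) ^ (2 * m + 1) := by gcongr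
      _ = 72 * (a * 3 ^ m + 1) ^ 2 * 3 ^ (2 * m + 1) * (Nat.log 2 #U + 1 : ℝ) ^ (2 * m + 1) /
            ψ ^ (2 * m + 1) := by rw [mul_pow, div_pow]; ring
      _ ≤ ψ ^ (2 * m + 2) * #U / ψ ^ (2 * m + 1) := by gcongr
      _ = ψ * #U := by field_simp; ring
  have hlt : a * (3 * ρ : ℝ) ^ m < h := by
    push_cast [h]
    exact Nat.lt_floor_add_one _
  refine hlt.not_ge ?_
  calc (h : ℝ) = #𝒞 := by rw [hcard]
    _ ≤ a * ((2 * ρ : ℕ) + 1 : ℝ) ^ m := hH _ _ h𝒞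
    _ ≤ a * (3 * ρ : ℝ) ^ m := by push_cast; gcongr; linarith

theorem exists_not_isVertexExpander.{u} (ha : 0 ≤ a) (m : ℕ) :
    ∃ D : ℝ, 1 ≤ D ∧ ∀ {V : Type u} {H : SimpleGraph V},
      (∀ r 𝒞, IsCliqueModel H r 𝒞 → #𝒞 ≤ a * (r + 1 : ℝ) ^ m) →
      ∀ (U : Finset V) (x : ℝ), D ≤ x → x ^ (2 * m + 4) = #U →
        ¬IsVertexExpander H U (D / x) := by
  obtain ⟨B, hB, hlog⟩ := exists_log_two_pow_le_mul_sq (2 * m + 4) (2 * m)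
  set b : ℝ := 72 * (a * 3 ^ m + 1) ^ 2 * 3 ^ (2 * m + 1)
  have hb : 1 ≤ b := by
    have ha' : 0 ≤ a * 3 ^ m := by positivity
    have h₁ : 1 ≤ (a * 3 ^ m + 1) ^ 2 := one_le_pow₀ (by linarith)
    exact one_le_mul_of_one_le_of_one_le (by linarith) (one_le_pow₀ (by norm_num))
  have hD : 1 ≤ b * B := one_le_mul_of_one_le_of_one_le hb hB
  refine ⟨b * B, hD, fun hH U x hx hxU hU => ?_⟩
  have hx₁ : 1 ≤ x := hD.trans hx
  have hx₀ : 0 < x := zero_lt_one.trans_le hx₁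
  have hlt := hU.pow_mul_card_lt (by positivity) ((div_le_one hx₀).2 hx) ha hH
  refine hlt.not_ge ?_
  calc b * (Nat.log 2 #U + 1 : ℝ) ^ (2 * m + 1) ≤ b * (B * x ^ 2) := by
        gcongr
        exact hlog _ _ hx₁ hxU
    _ = b * B * x ^ 2 := by ring
    _ ≤ (b * B) ^ (2 * m + 2) * x ^ 2 := by gcongr; exact le_self_pow₀ hD (by lia)
    _ = (b * B / x) ^ (2 * m + 2) * #U := by rw [← hxU, div_pow]; field_simp; ring

end SparseCuts

section Division

variable {V : Type*} {H : SimpleGraph V} {U A : Finset V} {𝒟 ℰ : Finset (Finset V)}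
  {ψ D M ε s t x y : ℝ} {p : ℕ}

/-- The sets of `𝒟` are subsets of `U` with at most `s` elements that together cover the vertices
and the edges of the subgraph induced on `U`. -/
structure IsDivision (H : SimpleGraph V) (U : Finset V) (s : ℝ) (𝒟 : Finset (Finset V)) :
    Prop where
  subset : ∀ P ∈ 𝒟, P ⊆ U
  card_le : ∀ P ∈ 𝒟, #P ≤ s
  exists_mem : ∀ x ∈ U, ∃ P ∈ 𝒟, x ∈ P
  exists_mem_of_adj : ∀ x ∈ U, ∀ y ∈ U, H.Adj x y → ∃ P ∈ 𝒟, x ∈ P ∧ y ∈ P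

theorem isDivision_singleton (hs : #U ≤ s) : IsDivision H U s {U} where
  subset := by simp
  card_le := by simpa using hs
  exists_mem := by simp
  exists_mem_of_adj := by simp +contextual

theorem IsDivision.union [DecidableEq V] (h𝒟 : IsDivision H (A ∪ outerBoundary H U A) s 𝒟)
    (hℰ : IsDivision H (U \ A) s ℰ) (hA : A ⊆ U) : IsDivision H U s (𝒟 ∪ ℰ) where
  subset P hP := (Finset.mem_union.1 hP).elim
    (fun h => (h𝒟.subset P h).trans (Finset.union_subset hA outerBoundary_subset))
    fun h => (hℰ.subset P h).trans Finset.sdiff_subset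
  card_le P hP := (Finset.mem_union.1 hP).elim (h𝒟.card_le P) (hℰ.card_le P)
  exists_mem x hx := by
    by_cases hxA : x ∈ A
    · obtain ⟨P, hP, hxP⟩ := h𝒟.exists_mem x (Finset.mem_union_left _ hxA)
      exact ⟨P, Finset.mem_union_left _ hP, hxP⟩
    · obtain ⟨P, hP, hxP⟩ := hℰ.exists_mem x (Finset.mem_sdiff.2 ⟨hx, hxA⟩)
      exact ⟨P, Finset.mem_union_right _ hP, hxP⟩
  exists_mem_of_adj x hx y hy hxy := by
    have mem_closed {x y : V} (hxA : x ∈ A) (hy : y ∈ U) (hxy : H.Adj x y) :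
        y ∈ A ∪ outerBoundary H U A := by
      simp only [Finset.mem_union, mem_outerBoundary]
      tauto
    by_cases hxyA : x ∈ A ∨ y ∈ A
    · obtain ⟨P, hP, hxyP⟩ := h𝒟.exists_mem_of_adj x
        (hxyA.elim (Finset.mem_union_left _) fun h => mem_closed h hx hxy.symm) y
        (hxyA.elim (fun h => mem_closed h hy hxy) (Finset.mem_union_left _)) hxy
      exact ⟨P, Finset.mem_union_left _ hP, hxyP⟩
    · rw [not_or] at hxyA
      obtain ⟨P, hP, hxyP⟩ := hℰ.exists_mem_of_adj x (Finset.mem_sdiff.2 ⟨hx, hxyA.1⟩) y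
        (Finset.mem_sdiff.2 ⟨hy, hxyA.2⟩) hxy
      exact ⟨P, Finset.mem_union_right _ hP, hxyP⟩

theorem exists_sparse_cut_of_not_isVertexExpander [DecidableEq V] (hU : ¬IsVertexExpander H U ψ)
    (hψ : ψ ≤ 1 / 4) :
    ∃ A ⊆ U, A.Nonempty ∧ #(A ∪ outerBoundary H U A) ≤ (1 + ψ) * #A ∧
      #(A ∪ outerBoundary H U A) ≤ (5 / 6 : ℝ) * #U := by
  simp only [IsVertexExpander, not_forall, not_le] at hU
  obtain ⟨A, hA, hcard, hlt⟩ := hU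
  have hne : A.Nonempty := by
    rw [Finset.nonempty_iff_ne_empty]
    rintro rfl
    simp only [Finset.card_empty, Nat.cast_zero, mul_zero] at hlt
    exact (Nat.cast_nonneg _).not_gt hlt
  have hle : #(A ∪ outerBoundary H U A) ≤ (1 + ψ) * #A := by
    rw [Finset.card_union_of_disjoint disjoint_outerBoundary]
    push_cast
    linarith
  refine ⟨A, hA, hne, hle, hle.trans ?_⟩
  have hcard' : (3 * #A : ℝ) ≤ 2 * #U := by exact_mod_cast hcard
  calc (1 + ψ) * #A ≤ (1 + 1 / 4) * #A := by gcongr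
    _ ≤ 5 / 6 * #U := by linarith

/-- The overhead per vertex granted to the division of a set of `y` vertices. It increases with `y`,
so that the overhead of a cut is paid for by the decrease of the rate on its small side. -/
noncomputable def divisionRate (p : ℕ) (M ε y : ℝ) : ℝ := max 0 (ε - M * y ^ (-(p : ℝ)⁻¹))

theorem divisionRate_nonneg : 0 ≤ divisionRate p M ε y := le_max_left _ _

theorem divisionRate_le (hM : 0 ≤ M) (hε : 0 ≤ ε) (hy : 0 ≤ y) : divisionRate p M ε y ≤ ε :=
  max_le hε (sub_le_self _ (by positivity))

theorem divisionRate_mono (hM : 0 ≤ M) (hx : 0 < x) (hxy : x ≤ y) :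
    divisionRate p M ε x ≤ divisionRate p M ε y := by
  unfold divisionRate
  gcongr max 0 (ε - M * ?_)
  exact Real.rpow_le_rpow_of_nonpos hx hxy (by simp)

theorem exists_divisionRate_add_le (hp : p ≠ 0) (hD : 0 ≤ D) :
    ∃ M : ℝ, 0 ≤ M ∧ ∀ ε x : ℝ, 0 < x → M + 2 * D ≤ ε * x →
      divisionRate p M ε (5 / 6 * x ^ p) + 2 * (D / x) ≤ divisionRate p M ε (x ^ p) := by
  set κ : ℝ := (5 / 6) ^ (-(p : ℝ)⁻¹)
  have hκ : 1 < κ :=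
    Real.one_lt_rpow_of_pos_of_lt_one_of_neg (by norm_num) (by norm_num) (by simpa using hp.bot_lt)
  have hκ' : 0 < κ - 1 := sub_pos.2 hκ
  refine ⟨2 * D / (κ - 1), by positivity, fun ε x hx hεx => ?_⟩
  set M := 2 * D / (κ - 1)
  have hM : M * (κ - 1) = 2 * D := div_mul_cancel₀ _ hκ'.ne'
  have hroot : (x ^ p) ^ (-(p : ℝ)⁻¹) = x⁻¹ := by
    rw [Real.rpow_neg (by positivity), Real.pow_rpow_inv_natCast hx.le hp]
  rw [divisionRate, divisionRate, Real.mul_rpow (by norm_num) (by positivity), hroot,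
    ← le_sub_iff_add_le]
  refine max_le ?_ ?_
  · have : (M + 2 * D) / x ≤ ε := (div_le_iff₀ hx).2 hεx
    refine sub_nonneg.2 (le_max_of_le_right ?_)
    linarith [show (M + 2 * D) / x = M * x⁻¹ + 2 * (D / x) by ring]
  · refine le_sub_iff_add_le.2 (le_max_of_le_right (le_of_eq ?_))
    linear_combination (-x⁻¹) * hM

theorem mul_one_add_divisionRate_add_le {a b n : ℝ} (hM : 0 ≤ M) (hε : 0 ≤ ε) (hε₁ : ε ≤ 1)
    (hψ : 0 ≤ ψ) (hstep : divisionRate p M ε (5 / 6 * n) + 2 * ψ ≤ divisionRate p M ε n)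
    (ha : 0 ≤ a) (hb : 0 < b) (hn : a + b = n) (hy : 0 < y) (hya : y ≤ (1 + ψ) * a)
    (hyn : y ≤ 5 / 6 * n) :
    y * (1 + divisionRate p M ε y) + b * (1 + divisionRate p M ε b) ≤
      n * (1 + divisionRate p M ε n) := by
  set r := divisionRate p M ε (5 / 6 * n)
  have hr : 0 ≤ r := divisionRate_nonneg
  have hr₁ : r ≤ 1 := (divisionRate_le hM hε (hy.le.trans hyn)).trans hε₁
  have hyr : divisionRate p M ε y ≤ r := divisionRate_mono hM hy hyn
  have hbn : divisionRate p M ε b ≤ divisionRate p M ε n := divisionRate_mono hM hb (by linarith)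
  have hψr : ψ * (1 + r) ≤ ψ * 2 := by gcongr; linarith
  calc y * (1 + divisionRate p M ε y) + b * (1 + divisionRate p M ε b)
      ≤ y * (1 + r) + b * (1 + divisionRate p M ε n) := by gcongr
    _ ≤ (1 + ψ) * a * (1 + r) + b * (1 + divisionRate p M ε n) := by gcongr
    _ = a * (1 + r + ψ * (1 + r)) + b * (1 + divisionRate p M ε n) := by ring
    _ ≤ a * (1 + (r + 2 * ψ)) + b * (1 + divisionRate p M ε n) := by gcongr a * ?_ + _; linarith
    _ ≤ a * (1 + divisionRate p M ε n) + b * (1 + divisionRate p M ε n) := by gcongr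
    _ = n * (1 + divisionRate p M ε n) := by rw [← hn]; ring

theorem exists_isDivision_sum_le_divisionRate (hp : p ≠ 0) (hD : 0 ≤ D) (hM : 0 ≤ M) (hε : 0 ≤ ε)
    (hε₁ : ε ≤ 1) (ht : 0 < t) (htD : 4 * D ≤ t)
    (hcut : ∀ (U : Finset V) (x : ℝ), D ≤ x → x ^ p = #U → ¬IsVertexExpander H U (D / x))
    (hstep : ∀ x, t < x →
      divisionRate p M ε (5 / 6 * x ^ p) + 2 * (D / x) ≤ divisionRate p M ε (x ^ p))
    (U : Finset V) :
    ∃ 𝒟, IsDivision H U (t ^ p) 𝒟 ∧ ∑ P ∈ 𝒟, (#P : ℝ) ≤ #U * (1 + divisionRate p M ε #U) := by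
  classical
  induction U using Finset.strongInduction with
  | H U ih =>
  by_cases hsmall : (#U : ℝ) ≤ t ^ p
  · refine ⟨{U}, isDivision_singleton hsmall, ?_⟩
    rw [Finset.sum_singleton]
    exact le_mul_of_one_le_right (Nat.cast_nonneg _) (le_add_of_nonneg_right divisionRate_nonneg)
  obtain ⟨x, hx, hxU⟩ : ∃ x : ℝ, 0 ≤ x ∧ x ^ p = #U :=
    ⟨(#U : ℝ) ^ (p : ℝ)⁻¹, by positivity, Real.rpow_inv_natCast_pow (Nat.cast_nonneg _) hp⟩
  have htx : t < x := lt_of_pow_lt_pow_left₀ p hx (by rw [hxU]; exact not_le.1 hsmall)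
  have hx₀ : 0 < x := ht.trans htx
  obtain ⟨A, hAU, hA, hAψ, hA6⟩ := exists_sparse_cut_of_not_isVertexExpander
    (hcut U x (by linarith) hxU) ((div_le_iff₀ hx₀).2 (by linarith))
  have hcard : #A + #(U \ A) = #U := by
    rw [add_comm, Finset.card_sdiff_add_card_eq_card hAU]
  have hA₀ : 0 < #A := hA.card_pos
  have hle : #A ≤ #(A ∪ outerBoundary H U A) := Finset.card_le_card Finset.subset_union_left
  have hssub : A ∪ outerBoundary H U A ⊂ U := by
    refine (Finset.union_subset hAU outerBoundary_subset).ssubset_of_ne fun h => ?_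
    rw [h] at hA6
    linarith [show (0 : ℝ) < #U by exact_mod_cast (by lia : 0 < #U)]
  have hlt : #A < #U := hle.trans_lt (Finset.card_lt_card hssub)
  obtain ⟨𝒟, h𝒟, h𝒟card⟩ := ih _ hssub
  obtain ⟨ℰ, hℰ, hℰcard⟩ := ih _ (Finset.sdiff_ssubset hAU hA)
  refine ⟨𝒟 ∪ ℰ, h𝒟.union hℰ hAU, ?_⟩
  calc ∑ P ∈ 𝒟 ∪ ℰ, (#P : ℝ) ≤ ∑ P ∈ 𝒟, (#P : ℝ) + ∑ P ∈ ℰ, (#P : ℝ) := by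
        rw [← Finset.sum_union_inter]
        exact le_add_of_nonneg_right (by positivity)
    _ ≤ _ := add_le_add h𝒟card hℰcard
    _ ≤ #U * (1 + divisionRate p M ε #U) :=
        mul_one_add_divisionRate_add_le (ψ := D / x) hM hε hε₁ (by positivity) (hxU ▸ hstep x htx)
          (Nat.cast_nonneg #A) (Nat.cast_pos.2 (by lia)) (by exact_mod_cast hcard)
          (Nat.cast_pos.2 (by lia)) hAψ hA6

theorem exists_isDivision.{u} (hp : p ≠ 0) (hD : 0 < D) :
    ∃ Q : ℝ, 0 < Q ∧ ∀ {V : Type u} {H : SimpleGraph V},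
      (∀ (U : Finset V) (x : ℝ), D ≤ x → x ^ p = #U → ¬IsVertexExpander H U (D / x)) →
      ∀ ε, 0 < ε → ε ≤ 1 → ∀ U : Finset V,
        ∃ 𝒟, IsDivision H U ((Q / ε) ^ p) 𝒟 ∧ ∑ P ∈ 𝒟, (#P : ℝ) ≤ (1 + ε) * #U := by
  obtain ⟨M, hM, hstep⟩ := exists_divisionRate_add_le hp hD.le
  refine ⟨4 * D + M, by positivity, fun hcut ε hε hε₁ U => ?_⟩
  have ht : 4 * D + M ≤ (4 * D + M) / ε := le_div_self (by positivity) hε hε₁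
  obtain ⟨𝒟, h𝒟, hcard⟩ := exists_isDivision_sum_le_divisionRate (t := (4 * D + M) / ε) hp hD.le
    hM hε.le hε₁ (by positivity) (by linarith) hcut
    (fun x hx => hstep ε x (by linarith) (by linarith [(div_lt_iff₀' hε).1 hx])) U
  refine ⟨𝒟, h𝒟, hcard.trans ?_⟩
  rw [mul_comm]
  gcongr
  exact divisionRate_le hM hε.le (Nat.cast_nonneg _)

end Division

section Connecting

variable {V : Type*} {G : SimpleGraph V} {A B D : Set V} {R : Finset V} {x y : V} {b : ℕ}

/-- Every vertex of `D` has a vertex of `A` in its closed neighbourhood. -/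
def Dominates (G : SimpleGraph V) (A D : Set V) : Prop := ∀ v ∈ D, ∃ u ∈ A, Touches G u v

/-- Every component of the subgraph induced on `A` contains a vertex of `R`. -/
def RepresentsComponents (G : SimpleGraph V) (A : Set V) (R : Finset V) : Prop :=
  ∀ x ∈ A, ∃ r ∈ R, Linked G A x r

theorem Touches.linked (h : Touches G x y) (hx : x ∈ A) (hy : y ∈ A) : Linked G A x y :=
  ⟨1, h.linkedWithin hx hy⟩

theorem Dominates.mono (h : Dominates G A D) (hAB : A ⊆ B) : Dominates G B D := fun v hv =>
  let ⟨u, hu, huv⟩ := h v hv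
  ⟨u, hAB hu, huv⟩

theorem Dominates.exists_bridge (h : Dominates G A D) (hD : (G.induce D).Connected) (hAD : A ⊆ D)
    (hx : x ∈ A) (hy : y ∈ A) (hxy : ¬Linked G A x y) :
    ∃ u ∈ A, ∃ v ∈ A, Linked G A x u ∧ ¬Linked G A x v ∧
      ∃ u' ∈ D, ∃ v' ∈ D, Touches G u u' ∧ Touches G v v' ∧ G.Adj u' v' := by
  set T : Set V := {w | ∃ v ∈ A, ¬Linked G A x v ∧ Touches G v w}
  have hxT : x ∉ T := fun ⟨v, hv, hxv, hvx⟩ => hxv (hvx.symm.linked hx hv)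
  have hyT : y ∈ T := ⟨y, hy, hxy, .inl rfl⟩
  obtain ⟨u', v', ⟨_, hlink⟩, ⟨hv'D, v, hv, hxv, hvv'⟩, hadj⟩ :=
    (Linked.of_connected hD (hAD hx) (hAD hy)).exists_adj_of_notMem_of_mem hxT hyT
  obtain ⟨hu'D, hu'T⟩ := hlink.right_mem
  obtain ⟨u, hu, huu'⟩ := h u' hu'D
  have hxu : Linked G A x u := by
    by_contra hxu
    exact hu'T ⟨u, hu, hxu, huu'⟩
  exact ⟨u, hu, v, hv, hxu, hxv, u', hu'D, v', hv'D, huu', hvv', hadj⟩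

theorem RepresentsComponents.exists_erase [DecidableEq V] (hR : RepresentsComponents G A R)
    (hAB : A ⊆ B) (hB : ∀ z ∈ B, z ∈ A ∨ Linked G B z x) (hx : x ∈ A) (hy : y ∈ A)
    (hxy : ¬Linked G A x y) (hxy' : Linked G B x y) :
    ∃ r ∈ R, RepresentsComponents G B (R.erase r) := by
  obtain ⟨q, hq, hxq⟩ := hR x hx
  obtain ⟨r, hr, hyr⟩ := hR y hy
  have hqr : q ≠ r := by
    rintro rfl
    exact hxy (hxq.trans hyr.symm)
  have erase_of_linked {z : V} (h : Linked G B z x) : ∃ s ∈ R.erase r, Linked G B z s :=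
    ⟨q, Finset.mem_erase.2 ⟨hqr, hq⟩, h.trans (hxq.mono hAB)⟩
  refine ⟨r, hr, fun z hz => (hB z hz).elim (fun hzA => ?_) erase_of_linked⟩
  obtain ⟨s, hs, hzs⟩ := hR z hzA
  by_cases hsr : s = r
  · exact erase_of_linked (((hsr ▸ hzs).trans hyr.symm).mono hAB |>.trans hxy'.symm)
  · exact ⟨s, Finset.mem_erase.2 ⟨hsr, hs⟩, hzs.mono hAB⟩

theorem RepresentsComponents.connected_induce (hR : RepresentsComponents G A R)
    (hA : A.Nonempty) (hcard : #R ≤ 1) : (G.induce A).Connected := by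
  refine connected_induce_of_linked hA fun x hx y hy => ?_
  obtain ⟨r, hr, hxr⟩ := hR x hx
  obtain ⟨s, hs, hys⟩ := hR y hy
  exact hxr.trans (Finset.card_le_one.1 hcard r hr s hs ▸ hys.symm)

theorem Dominates.exists_superset_erase [DecidableEq V] {A : Finset V}
    (h : Dominates G A D) (hD : (G.induce D).Connected) (hAD : (A : Set V) ⊆ D)
    (hR : RepresentsComponents G (A : Set V) R) (hx : x ∈ A) (hy : y ∈ A)
    (hxy : ¬Linked G A x y) :
    ∃ B : Finset V, A ⊆ B ∧ (B : Set V) ⊆ D ∧ #(B \ A) ≤ 2 ∧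
      ∃ r ∈ R, RepresentsComponents G (B : Set V) (R.erase r) := by
  obtain ⟨u, hu, v, hv, hxu, hxv, u', hu'D, v', hv'D, huu', hvv', hadj⟩ :=
    h.exists_bridge hD hAD hx hy hxy
  set B : Finset V := A ∪ {u', v'}
  have hAB : (A : Set V) ⊆ B := Finset.coe_subset.2 Finset.subset_union_left
  have hu' : u' ∈ (B : Set V) := by simp [B]
  have hv' : v' ∈ (B : Set V) := by simp [B]
  have hu'x : Linked G B u' x := (huu'.symm.linked hu' (hAB hu)).trans (hxu.symm.mono hAB)
  have hv'x : Linked G B v' x := .trans (Touches.linked (.inr hadj.symm) hv' hu') hu'x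
  have hB (z) (hz : z ∈ (B : Set V)) : z ∈ (A : Set V) ∨ Linked G B z x := by
    obtain rfl | rfl | hz := by simpa [B] using hz
    exacts [.inr hu'x, .inr hv'x, .inl hz]
  refine ⟨B, Finset.subset_union_left, ?_, ?_, ?_⟩
  · simpa [B, Set.insert_subset_iff] using ⟨hu'D, hv'D, hAD⟩
  · rw [Finset.union_sdiff_left]
    exact (Finset.card_le_card Finset.sdiff_subset).trans Finset.card_le_two
  · exact hR.exists_erase hAB hB hx hv hxv (hv'x.symm.trans (hvv'.symm.linked hv' (hAB hv)))

theorem Dominates.exists_connected_superset [DecidableEq V] {A : Finset V}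
    (h : Dominates G A D) (hD : (G.induce D).Connected) (hAD : (A : Set V) ⊆ D)
    (hR : RepresentsComponents G (A : Set V) R) (hb : #R ≤ b + 1) :
    ∃ B : Finset V, A ⊆ B ∧ (B : Set V) ⊆ D ∧ (G.induce (B : Set V)).Connected ∧
      #(B \ A) ≤ 2 * b := by
  have hA : (A : Set V).Nonempty :=
    let ⟨v⟩ := hD.nonempty
    let ⟨u, hu, _⟩ := h v v.2
    ⟨u, hu⟩
  induction b generalizing A R with
  | zero => exact ⟨A, subset_rfl, hAD, hR.connected_induce hA hb, by simp⟩
  | succ b ih =>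
    by_cases hlinked : ∀ x ∈ (A : Set V), ∀ y ∈ (A : Set V), Linked G A x y
    · exact ⟨A, subset_rfl, hAD, connected_induce_of_linked hA hlinked, by simp⟩
    push Not at hlinked
    obtain ⟨x, hx, y, hy, hxy⟩ := hlinked
    obtain ⟨A', hAA', hA'D, hcard, r, hr, hR'⟩ := h.exists_superset_erase hD hAD hR hx hy hxy
    have hAA'' : (A : Set V) ⊆ A' := Finset.coe_subset.2 hAA'
    obtain ⟨B, hA'B, hBD, hB, hcard'⟩ := ih (h.mono hAA'') hA'D hR'
      (by rw [Finset.card_erase_of_mem hr]; lia) (hA.mono hAA'')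
    refine ⟨B, hAA'.trans hA'B, hBD, hB, ?_⟩
    rw [Finset.card_sdiff_of_subset (hAA'.trans hA'B)]
    rw [Finset.card_sdiff_of_subset hA'B] at hcard'
    rw [Finset.card_sdiff_of_subset hAA'] at hcard
    lia

end Connecting

section Exchange

variable {V : Type*} {G H : SimpleGraph V} {δ : V → ℕ} {c : V → Finset V} {D : Set V}
  {A L S P I U : Finset V} {x y v : V} {K : ℕ}

/-- `L` is a candidate solution: a connected subset of `D` that satisfies the demands `δ`. -/
structure IsFeasible (G : SimpleGraph V) (δ : V → ℕ) (D : Set V) (L : Finset V) : Prop where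
  subset : (L : Set V) ⊆ D
  connected : (G.induce (L : Set V)).Connected
  meetsDemands : MeetsDemands G δ L

/-- No feasible set that differs from `L` in at most `K` elements is smaller than `L`. -/
def IsLocallyMinimal [DecidableEq V] (feasible : Finset V → Prop) (K : ℕ) (L : Finset V) : Prop :=
  ∀ L', feasible L' → #(symmDiff L L') ≤ K → #L ≤ #L'

/-- For every vertex `v`, the set `c v` consists of exactly `δ v` vertices of `L` in the closed
neighbourhood of `v`. -/
structure IsDemandCertificate (G : SimpleGraph V) (δ : V → ℕ) (L : Finset V) (c : V → Finset V) :
    Prop where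
  subset : ∀ v, c v ⊆ L
  touches : ∀ v, ∀ l ∈ c v, Touches G l v
  card_eq : ∀ v, #(c v) = δ v

/-- `I` is a part of `P` all of whose `H`-neighbours in `U` lie in `P`. -/
structure IsInterior (H : SimpleGraph V) (U P I : Finset V) : Prop where
  subset : I ⊆ P
  mem_of_adj : ∀ x ∈ I, ∀ y ∈ U, H.Adj x y → y ∈ P

theorem le_exchangeGraph : G ≤ exchangeGraph G c := fun _ _ h =>
  (SimpleGraph.fromRel_adj ..).2 ⟨h.ne, .inl (.inl h)⟩

theorem exchangeGraph_adj_of_mem (hxy : x ≠ y) (hx : x ∈ c v) (hy : Touches G y v) :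
    (exchangeGraph G c).Adj x y :=
  (SimpleGraph.fromRel_adj ..).2 ⟨hxy, .inl (.inr ⟨v, hx, hy⟩)⟩

theorem IsInterior.anti (h : IsInterior H U P I) (hGH : G ≤ H) : IsInterior G U P I :=
  ⟨h.subset, fun x hx y hy hxy => h.mem_of_adj x hx y hy (hGH hxy)⟩

theorem MeetsDemands.exists_isDemandCertificate (h : MeetsDemands G δ L) :
    ∃ c, IsDemandCertificate G δ L c := by
  classical
  have exists_subset (v : V) : ∃ F ⊆ {u ∈ L | u = v ∨ G.Adj u v}, #F = δ v := by
    refine Finset.exists_subset_card_eq ((h v).trans_eq ?_)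
    rw [← Set.ncard_coe_finset, Finset.coe_filter]
    simp only [Finset.mem_coe]
  choose c hc hcard using exists_subset
  exact ⟨c, fun v => (hc v).trans (Finset.filter_subset _ _),
    fun v l hl => (Finset.mem_filter.1 (hc v hl)).2, hcard⟩

theorem MeetsDemands.dominates (h : MeetsDemands G δ A) (hδ : ∀ v, 1 ≤ δ v) :
    Dominates G A D := fun v _ =>
  let ⟨u, hu, huv⟩ := Set.nonempty_of_ncard_ne_zero (Nat.one_le_iff_ne_zero.1 ((hδ v).trans (h v)))
  ⟨u, hu, huv⟩

/-- If `I` meets `c v`, then all vertices of `S` in the closed neighbourhood of `v` lie in `P`;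
otherwise `c v` survives the exchange. -/
theorem MeetsDemands.of_exchange [DecidableEq V] (hS : MeetsDemands G δ S)
    (hc : IsDemandCertificate G δ L c) (hI : IsInterior (exchangeGraph G c) (L ∪ S) P I)
    (hA : L \ I ∪ S ∩ P ⊆ A) : MeetsDemands G δ A := by
  intro v
  by_cases hv : ∃ l ∈ c v, l ∈ I
  · obtain ⟨l, hl, hlI⟩ := hv
    refine (hS v).trans (Set.ncard_le_ncard ?_ (A.finite_toSet.subset fun _ hu => hu.1))
    rintro u ⟨huS, huv⟩
    have huP : u ∈ P := by
      rcases eq_or_ne l u with rfl | hlu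
      · exact hI.subset hlI
      · exact hI.mem_of_adj l hlI u (Finset.mem_union_right _ huS)
          (exchangeGraph_adj_of_mem hlu hl huv)
    exact ⟨hA (Finset.mem_union_right _ (Finset.mem_inter.2 ⟨huS, huP⟩)), huv⟩
  · rw [← hc.card_eq v, ← Set.ncard_coe_finset]
    refine Set.ncard_le_ncard ?_ (A.finite_toSet.subset fun _ hu => hu.1)
    intro u hu
    have huI : u ∉ I := fun h => hv ⟨u, hu, h⟩
    exact ⟨hA (Finset.mem_union_left _ (Finset.mem_sdiff.2 ⟨hc.subset v hu, huI⟩)),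
      hc.touches v u hu⟩

theorem IsInterior.exists_linked_sdiff [DecidableEq V] (hI : IsInterior G U P I) (hLU : L ⊆ U)
    (hL : (G.induce (L : Set V)).Connected) (hLI : (L ∩ I).Nonempty) (hx : x ∈ L \ I) :
    ∃ r ∈ P \ I, Linked G (L \ I) x r := by
  obtain ⟨z, hz⟩ := hLI
  rw [Finset.mem_inter] at hz
  rw [Finset.mem_sdiff] at hx
  obtain ⟨y, w, ⟨n, hxy⟩, hw, hyw⟩ :=
    (Linked.of_connected hL hx.1 hz.1).exists_adj_of_notMem_of_mem (I := I) hx.2 hz.2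
  obtain ⟨hyL, hyI⟩ := hxy.right_mem
  exact ⟨y, Finset.mem_sdiff.2 ⟨hI.mem_of_adj w hw.2 y (hLU hyL) hyw.symm, hyI⟩, n, hxy⟩

theorem IsInterior.exists_linked_inter [DecidableEq V] (hI : IsInterior G U P I) (hSU : S ⊆ U)
    (hS : (G.induce (S : Set V)).Connected) (hSP : ¬S ⊆ P) (hx : x ∈ S ∩ P) :
    ∃ r ∈ P \ I, Linked G (S ∩ P) x r := by
  obtain ⟨z, hzS, hzP⟩ := Finset.not_subset.1 hSP
  rw [Finset.mem_inter] at hx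
  obtain ⟨y, w, ⟨n, hxy⟩, hw, hyw⟩ :=
    (Linked.of_connected hS hx.1 hzS).exists_adj_of_notMem_of_mem (I := (P : Set V)ᶜ)
      (not_not.2 hx.2) hzP
  rw [Set.sdiff_compl] at hxy
  obtain ⟨-, hyP⟩ := hxy.right_mem
  have hyI : y ∉ I := fun h => hw.2 (hI.mem_of_adj y h w (hSU hw.1) hyw)
  exact ⟨y, Finset.mem_sdiff.2 ⟨hyP, hyI⟩, n, hxy⟩

theorem IsInterior.exists_representsComponents [DecidableEq V] (hI : IsInterior G (L ∪ S) P I)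
    (hL : (G.induce (L : Set V)).Connected) (hS : (G.induce (S : Set V)).Connected)
    (hLI : (L ∩ I).Nonempty) :
    ∃ R, #R ≤ #(P \ I) + 1 ∧ RepresentsComponents G ↑(L \ I ∪ S ∩ P) R := by
  obtain ⟨s, hs⟩ := hS.nonempty
  have hL' : (L \ I : Set V) ⊆ ↑(L \ I ∪ S ∩ P) := by simp
  have hS' : (S ∩ P : Set V) ⊆ ↑(L \ I ∪ S ∩ P) := by simp
  refine ⟨insert s (P \ I), Finset.card_insert_le _ _, fun x hx => ?_⟩
  rcases Finset.mem_union.1 hx with hx | hx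
  · obtain ⟨r, hr, hxr⟩ := hI.exists_linked_sdiff Finset.subset_union_left hL hLI hx
    exact ⟨r, Finset.mem_insert_of_mem hr, hxr.mono hL'⟩
  by_cases hSP : S ⊆ P
  · have hxs : Linked G S x s := .of_connected hS (Finset.mem_inter.1 hx).1 hs
    refine ⟨s, Finset.mem_insert_self _ _, hxs.mono (subset_trans ?_ hS')⟩
    exact Set.subset_inter subset_rfl (Finset.coe_subset.2 hSP)
  · obtain ⟨r, hr, hxr⟩ := hI.exists_linked_inter Finset.subset_union_right hS hSP hx
    exact ⟨r, Finset.mem_insert_of_mem hr, hxr.mono hS'⟩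

theorem symmDiff_subset_of_exchange [DecidableEq V] (hI : I ⊆ P) (hA : L \ I ∪ S ∩ P ⊆ A) :
    symmDiff L A ⊆ P ∪ A \ (L \ I ∪ S ∩ P) := fun x hx => by
  have hxI := @hI x
  have hxA := @hA x
  simp only [Finset.mem_symmDiff, Finset.mem_union, Finset.mem_sdiff, Finset.mem_inter] at *
  tauto

theorem IsLocallyMinimal.card_inter_le [DecidableEq V]
    (hmin : IsLocallyMinimal (IsFeasible G δ D) K L) (hL : IsFeasible G δ D L)
    (hS : IsFeasible G δ D S) (hD : (G.induce D).Connected) (hδ : ∀ v, 1 ≤ δ v)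
    (hc : IsDemandCertificate G δ L c) (hI : IsInterior (exchangeGraph G c) (L ∪ S) P I)
    (hK : 3 * #P ≤ K) : #(L ∩ I) ≤ #(S ∩ P) + 2 * #(P \ I) := by
  rcases (L ∩ I).eq_empty_or_nonempty with hLI | hLI
  · simp [hLI]
  set A := L \ I ∪ S ∩ P
  have hmeets {B : Finset V} (hAB : A ⊆ B) : MeetsDemands G δ B :=
    hS.meetsDemands.of_exchange hc hI hAB
  have hAD : (A : Set V) ⊆ D := fun z hz => (Finset.mem_union.1 hz).elim
    (fun h => hL.subset (Finset.mem_sdiff.1 h).1) fun h => hS.subset (Finset.mem_inter.1 h).1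
  obtain ⟨R, hR, hAR⟩ :=
    (hI.anti le_exchangeGraph).exists_representsComponents hL.connected hS.connected hLI
  obtain ⟨B, hAB, hBD, hB, hBA⟩ :=
    ((hmeets subset_rfl).dominates hδ).exists_connected_superset hD hAD hAR hR
  have hPI : #(P \ I) ≤ #P := Finset.card_le_card Finset.sdiff_subset
  have hLB : #(symmDiff L B) ≤ K :=
    calc #(symmDiff L B) ≤ #(P ∪ B \ A) :=
          Finset.card_le_card (symmDiff_subset_of_exchange hI.subset hAB)
      _ ≤ #P + #(B \ A) := Finset.card_union_le _ _
      _ ≤ K := by lia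
  have hLB' : #L ≤ #B := hmin B ⟨hBD, hB, hmeets hAB⟩ hLB
  have hBcard : #(B \ A) + #A = #B := Finset.card_sdiff_add_card_eq_card hAB
  have hAcard : #A ≤ #(L \ I) + #(S ∩ P) := Finset.card_union_le _ _
  have hLcard : #(L \ I) + #(L ∩ I) = #L := Finset.card_sdiff_add_card_inter L I
  lia

end Exchange

section DoubleCounting

variable {V : Type*} [DecidableEq V] {H : SimpleGraph V} {A P U L S : Finset V}
  {𝒟 : Finset (Finset V)} {s : ℝ} {x : V}

/-- The number of sets of the family `𝒟` that contain `x`. -/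
def coverCount (𝒟 : Finset (Finset V)) (x : V) : ℕ := #{P ∈ 𝒟 | x ∈ P}

/-- The vertices of `U` that lie in more than one set of the family `𝒟`. -/
def overlap (𝒟 : Finset (Finset V)) (U : Finset V) : Finset V := {x ∈ U | 2 ≤ coverCount 𝒟 x}

theorem sum_card_inter_eq_sum_coverCount (𝒟 : Finset (Finset V)) (A : Finset V) :
    ∑ P ∈ 𝒟, #(A ∩ P) = ∑ x ∈ A, coverCount 𝒟 x := by
  simp only [← Finset.filter_mem_eq_inter]
  exact (Finset.sum_card_bipartiteAbove_eq_sum_card_bipartiteBelow (· ∈ ·)).symm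

theorem IsDivision.one_le_coverCount (h𝒟 : IsDivision H U s 𝒟) (hx : x ∈ U) :
    1 ≤ coverCount 𝒟 x :=
  let ⟨P, hP, hxP⟩ := h𝒟.exists_mem x hx
  Finset.card_pos.2 ⟨P, Finset.mem_filter.2 ⟨hP, hxP⟩⟩

theorem IsDivision.isInterior_sdiff_overlap (h𝒟 : IsDivision H U s 𝒟) (hP : P ∈ 𝒟) :
    IsInterior H U P (P \ overlap 𝒟 U) where
  subset := Finset.sdiff_subset
  mem_of_adj x hx y hy hxy := by
    obtain ⟨hxP, hxO⟩ := Finset.mem_sdiff.1 hx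
    have hxU : x ∈ U := h𝒟.subset P hP hxP
    obtain ⟨P', hP', hxP', hyP'⟩ := h𝒟.exists_mem_of_adj x hxU y hy hxy
    have hone : coverCount 𝒟 x ≤ 1 := by
      by_contra! h
      exact hxO (Finset.mem_filter.2 ⟨hxU, h⟩)
    rwa [Finset.card_le_one.1 hone P (Finset.mem_filter.2 ⟨hP, hxP⟩) P'
      (Finset.mem_filter.2 ⟨hP', hxP'⟩)]

theorem IsDivision.sum_coverCount_add_card_le (h𝒟 : IsDivision H U s 𝒟) (hA : A ⊆ U) :
    ∑ x ∈ A, coverCount 𝒟 x + #U ≤ #A + ∑ x ∈ U, coverCount 𝒟 x := by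
  have hle : #(U \ A) ≤ ∑ x ∈ U \ A, coverCount 𝒟 x := by
    rw [Finset.card_eq_sum_ones]
    exact Finset.sum_le_sum fun x hx => h𝒟.one_le_coverCount (Finset.mem_sdiff.1 hx).1
  linarith [Finset.sum_sdiff (f := coverCount 𝒟) hA, Finset.card_sdiff_add_card_eq_card hA]

/-- By `sum_coverCount_add_card_le` the excess `w = ∑ x ∈ U, (coverCount 𝒟 x - 1)` bounds the
excess on `S` and on the overlap, so both `#(overlap 𝒟 U)` and half of its cover count are at most
`w`. -/
theorem IsDivision.card_add_le_of_card_inter_le (h𝒟 : IsDivision H U s 𝒟) (hL : L ⊆ U)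
    (hS : S ⊆ U)
    (h : ∀ P ∈ 𝒟, #(L ∩ (P \ overlap 𝒟 U)) ≤ #(S ∩ P) + 2 * #(P \ (P \ overlap 𝒟 U))) :
    #L + 6 * #U ≤ #S + 6 * ∑ P ∈ 𝒟, #P := by
  set O := overlap 𝒟 U
  have hsum : ∑ x ∈ L \ O, coverCount 𝒟 x ≤
      ∑ x ∈ S, coverCount 𝒟 x + 2 * ∑ x ∈ O, coverCount 𝒟 x := by
    simp only [← sum_card_inter_eq_sum_coverCount, Finset.mul_sum, ← Finset.sum_add_distrib]
    refine Finset.sum_le_sum fun P hP => ?_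
    simpa only [Finset.inter_sdiff_assoc, Finset.sdiff_inter_right_comm,
      Finset.sdiff_sdiff_self_left, Finset.inter_comm P] using h P hP
  have hcover : ∑ P ∈ 𝒟, #P = ∑ x ∈ U, coverCount 𝒟 x := by
    rw [← sum_card_inter_eq_sum_coverCount]
    exact Finset.sum_congr rfl fun P hP => by rw [Finset.inter_eq_right.2 (h𝒟.subset P hP)]
  have hO : 2 * #O ≤ ∑ x ∈ O, coverCount 𝒟 x := by
    rw [mul_comm, ← smul_eq_mul]
    exact Finset.card_nsmul_le_sum _ _ _ fun x hx => (Finset.mem_filter.1 hx).2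
  have hLO : #(L \ O) ≤ ∑ x ∈ L \ O, coverCount 𝒟 x := by
    rw [Finset.card_eq_sum_ones]
    exact Finset.sum_le_sum fun x hx => h𝒟.one_le_coverCount (hL (Finset.mem_sdiff.1 hx).1)
  have hSw := h𝒟.sum_coverCount_add_card_le hS
  have hOw := h𝒟.sum_coverCount_add_card_le (A := O) (Finset.filter_subset _ _)
  have hLle : #L ≤ #(L \ O) + #O := tsub_le_iff_right.1 (Finset.le_card_sdiff O L)
  lia

end DoubleCounting

section LocalSearch

variable {V : Type*} {G : SimpleGraph V} {δ : V → ℕ} {γ : V → Finset V} {D : Set V}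
  {L S : Finset V} {𝒟 : Finset (Finset V)} {K k Δ : ℕ} {c s ε : ℝ}

theorem IsLocallyMinimal.card_le_of_isDivision [DecidableEq V]
    (hmin : IsLocallyMinimal (IsFeasible G δ D) K L) (hL : IsFeasible G δ D L)
    (hS : IsFeasible G δ D S) (hD : (G.induce D).Connected) (hδ : ∀ v, 1 ≤ δ v)
    (hγ : IsDemandCertificate G δ L γ) (h𝒟 : IsDivision (exchangeGraph G γ) (L ∪ S) s 𝒟)
    (hs : 3 * s ≤ K) (hε : 0 ≤ ε) (hε₁ : ε ≤ 1)
    (hsum : ∑ P ∈ 𝒟, (#P : ℝ) ≤ (1 + ε / 24) * #(L ∪ S)) : (#L : ℝ) ≤ (1 + ε) * #S := by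
  have hcount : #L + 6 * #(L ∪ S) ≤ #S + 6 * ∑ P ∈ 𝒟, #P := by
    refine h𝒟.card_add_le_of_card_inter_le Finset.subset_union_left Finset.subset_union_right
      fun P hP => ?_
    refine hmin.card_inter_le hL hS hD hδ hγ (h𝒟.isInterior_sdiff_overlap hP) ?_
    have hPK : (3 * #P : ℝ) ≤ K := le_trans (by linarith [h𝒟.card_le P hP]) hs
    exact_mod_cast hPK
  have hcountℝ : (#L : ℝ) + 6 * #(L ∪ S) ≤ #S + 6 * ∑ P ∈ 𝒟, (#P : ℝ) := by exact_mod_cast hcount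
  have hunion : (#(L ∪ S) : ℝ) ≤ #L + #S := by exact_mod_cast Finset.card_union_le L S
  have hmul : ε * #(L ∪ S) ≤ ε * (#L + #S) := by gcongr
  have hεS : ε * ε * #S ≤ ε * 1 * #S := by gcongr
  refine le_of_mul_le_mul_left (a := 1 - ε / 4) ?_ (by linarith)
  calc (1 - ε / 4) * #L ≤ (1 + ε / 4) * #S := by linarith
    _ ≤ (1 - ε / 4) * ((1 + ε) * #S) := by nlinarith

theorem card_le_of_isCliqueModel_exchangeGraph (hc : 0 ≤ c)
    (hG : ∀ r : ℕ, NablaLE G r (c * ((r : ℝ) + 1) ^ k)) (hγ : ∀ v, ∀ l ∈ γ v, Touches G l v)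
    (hcard : ∀ v, #(γ v) ≤ Δ) (R : ℕ) (𝒞 : Finset (Finset V))
    (h𝒞 : IsCliqueModel (exchangeGraph G γ) R 𝒞) :
    (#𝒞 : ℝ) ≤ (1 + 16 * c * (Δ + 1) * 3 ^ (k + 1)) * (R + 1) ^ (k + 1) := by
  have hpow : ((3 * R + 1 : ℕ) + 1 : ℝ) ^ (k + 1) ≤ 3 ^ (k + 1) * (R + 1) ^ (k + 1) := by
    rw [← mul_pow]
    gcongr
    push_cast
    linarith
  calc (#𝒞 : ℝ)
      ≤ 1 + 16 * (c * ((3 * R + 1 : ℕ) + 1) ^ k) * (((3 * R + 1 : ℕ) + 1) * (Δ + 1 : ℕ)) :=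
        h𝒞.card_le_of_nablaLE hγ hcard (hG _) (by positivity)
    _ = 1 + 16 * c * (Δ + 1) * ((3 * R + 1 : ℕ) + 1) ^ (k + 1) := by push_cast; ring
    _ ≤ (R + 1) ^ (k + 1) + 16 * c * (Δ + 1) * (3 ^ (k + 1) * (R + 1) ^ (k + 1)) := by
        gcongr
        exact one_le_pow₀ (by linarith [R.cast_nonneg (α := ℝ)])
    _ = _ := by ring

theorem exists_isDivision_exchangeGraph.{u} (k Δ : ℕ) (hc : 0 ≤ c) :
    ∃ Q : ℝ, 0 < Q ∧ ∀ {V : Type u} {G : SimpleGraph V} {γ : V → Finset V},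
      (∀ r : ℕ, NablaLE G r (c * ((r : ℝ) + 1) ^ k)) → (∀ v, ∀ l ∈ γ v, Touches G l v) →
      (∀ v, #(γ v) ≤ Δ) → ∀ ε, 0 < ε → ε ≤ 1 → ∀ U : Finset V,
        ∃ 𝒟, IsDivision (exchangeGraph G γ) U ((Q / ε) ^ (2 * k + 6)) 𝒟 ∧
          ∑ P ∈ 𝒟, (#P : ℝ) ≤ (1 + ε) * #U := by
  obtain ⟨B, hB, hcut⟩ := exists_not_isVertexExpander.{u}
    (a := 1 + 16 * c * (Δ + 1) * 3 ^ (k + 1)) (by positivity) (k + 1)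
  obtain ⟨Q, hQ, hdiv⟩ := exists_isDivision.{u} (p := 2 * k + 6) (by simp) (one_pos.trans_le hB)
  exact ⟨Q, hQ, fun hG hγ hcard => hdiv
    (hcut (card_le_of_isCliqueModel_exchangeGraph hc hG hγ hcard))⟩

theorem IsLocallyMinimal.anti [DecidableEq V] {feasible : Finset V → Prop} {K' : ℕ}
    (h : IsLocallyMinimal feasible K L) (hK : K' ≤ K) : IsLocallyMinimal feasible K' L :=
  fun L' hL' hLL' => h L' hL' (hLL'.trans hK)

theorem isLocallyMinimal_isFeasible_iff [DecidableEq V] [Finite V] :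
    IsLocallyMinimal (IsFeasible G δ D) K L ↔
      ¬∃ L' ⊆ D, (G.induce L').Connected ∧ MeetsDemands G δ L' ∧
        (symmDiff (L : Set V) L').ncard ≤ K ∧ L'.ncard < (L : Set V).ncard := by
  constructor
  · rintro h ⟨L', hL'D, hL', hL'δ, hK, hlt⟩
    lift L' to Finset V using L'.toFinite
    rw [← Finset.coe_symmDiff] at hK
    simp only [Set.ncard_coe_finset] at hK hlt
    exact (h L' ⟨hL'D, hL', hL'δ⟩ hK).not_gt hlt
  · intro h L' hL' hK
    by_contra! hlt
    refine h ⟨L', hL'.subset, hL'.connected, hL'.meetsDemands, ?_, ?_⟩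
    · rwa [← Finset.coe_symmDiff, Set.ncard_coe_finset]
    · simpa only [Set.ncard_coe_finset] using hlt

theorem natCeil_le_natCeil_mul_one_add_log_pow {a : ℝ} (ha : 0 ≤ a) (hε : 0 < ε) (hε₁ : ε ≤ 1)
    (n : ℕ) : ⌈a⌉₊ ≤ ⌈a * (1 + Real.log (1 / ε)) ^ n⌉₊ := by
  have hlog : 0 ≤ Real.log (1 / ε) := Real.log_nonneg ((one_le_div hε).2 hε₁)
  gcongr
  exact le_mul_of_one_le_right ha (one_le_pow₀ (by linarith))

theorem stmt17_general.{u} (k Δ : ℕ) {c : ℝ} (hc : 0 ≤ c) :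
    ∃ C : ℝ, 0 < C ∧
      ∀ (V : Type u) [DecidableEq V] (G : SimpleGraph V),
        (∀ r : ℕ, NablaLE G r (c * ((r : ℝ) + 1) ^ k)) →
        ∀ δ : V → ℕ, (∀ v, 1 ≤ δ v ∧ δ v ≤ Δ) →
        ∀ D : Set V, (G.induce D).Connected →
        ∀ ε : ℝ, 0 < ε → ε ≤ 1 →
          ∀ L, IsFeasible G δ D L →
            IsLocallyMinimal (IsFeasible G δ D) ⌈C * ε⁻¹ ^ (2 * k + 6)⌉₊ L →
            ∀ S, IsFeasible G δ D S → (#L : ℝ) ≤ (1 + ε) * #S := by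
  obtain ⟨Q, hQ, hdiv⟩ := exists_isDivision_exchangeGraph.{u} k Δ hc
  refine ⟨3 * (24 * Q) ^ (2 * k + 6), by positivity, ?_⟩
  intro V _ G hG δ hδ D hD ε hε hε₁ L hL hmin S hS
  obtain ⟨γ, hγ⟩ := hL.meetsDemands.exists_isDemandCertificate
  obtain ⟨𝒟, h𝒟, hsum⟩ := hdiv hG hγ.touches (fun v => (hγ.card_eq v).trans_le (hδ v).2) (ε / 24)
    (by positivity) (by linarith) (L ∪ S)
  refine hmin.card_le_of_isDivision hL hS hD (fun v => (hδ v).1) hγ h𝒟 ?_ hε.le hε₁ hsum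
  calc 3 * (Q / (ε / 24)) ^ (2 * k + 6) = 3 * (24 * Q) ^ (2 * k + 6) * ε⁻¹ ^ (2 * k + 6) := by
        rw [mul_assoc, ← mul_pow]
        congr 2
        ring
    _ ≤ _ := Nat.le_ceil _

end LocalSearch

/-- PTAS via local search for connected dominating set with demands on graphs
with polynomial expansion `∇_r(G) ≤ c(r+1)^k`. -/
theorem stmt17 (k Δ : ℕ) (hk : 1 ≤ k) (hΔ : 1 ≤ Δ) (c : ℝ) (hc : 0 < c) :
    ∃ C : ℝ, 0 < C ∧
      ∀ (V : Type) [Fintype V] (G : SimpleGraph V), G.Connected →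
        (∀ r : ℕ, NablaLE G r (c * ((r : ℝ) + 1) ^ k)) →
        ∀ δ : V → ℕ, (∀ v, 1 ≤ δ v ∧ δ v ≤ Δ) →
        ∀ D : Set V, (G.induce D).Connected → MeetsDemands G δ D →
        ∀ ε : ℝ, 0 < ε → ε < 1 →
          ∀ L ⊆ D, (G.induce L).Connected → MeetsDemands G δ L →
            (¬ ∃ L' ⊆ D, (G.induce L').Connected ∧ MeetsDemands G δ L' ∧
              (symmDiff L L').ncard ≤
                ⌈C * ε⁻¹ ^ (2 * k + 6) * (1 + Real.log (1 / ε)) ^ (2 * k + 5)⌉₊ ∧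
              L'.ncard < L.ncard) →
            ∀ S ⊆ D, (G.induce S).Connected → MeetsDemands G δ S →
              (L.ncard : ℝ) ≤ (1 + ε) * (S.ncard : ℝ) := by
  classical
  obtain ⟨C, hC, hmain⟩ := stmt17_general k Δ hc.le
  refine ⟨C, hC, fun V _ G _ hG δ hδ D hD _ ε hε hε₁ L hLD hL hLδ hmin S hSD hS hSδ => ?_⟩
  lift L to Finset V using L.toFinite
  lift S to Finset V using S.toFinite
  have hmin' := (isLocallyMinimal_isFeasible_iff.2 hmin).anti
    (natCeil_le_natCeil_mul_one_add_log_pow (by positivity) hε hε₁.le _)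
  simpa only [Set.ncard_coe_finset] using
    hmain V G hG δ hδ D hD ε hε hε₁.le L ⟨hLD, hL, hLδ⟩ hmin' S ⟨hSD, hS, hSδ⟩
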